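/- In the tower construction, for every n ≥ 2 the ring Bₙ = Kr_{K_{n−1}(X′ₙ)}(D_{n−1}, b) is an r-dimensional Bézout domain. -/

import Mathlib

/- Preamble: the tower construction of Fontana–Kabbaj (Example 3.1).
All rings are realized as subsets/subrings of one ambient field `Amb k0 r`:
the rational function field over `k0` in the indeterminates
`X₁, X₂, …` (indexed by `ℕ`), `Y`, and `Z₁, …, Z_{r-1}`. -/

noncomputable section

open Polynomial

/-- Index type for the indeterminates: `Sum.inl n` is `Xₙ`, `Sum.inr (Sum.inl ())` is `Y`,
and `Sum.inr (Sum.inr i)` is `Z_{i+1}`. -/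
abbrev TowerVars (r : ℕ) : Type := ℕ ⊕ (Unit ⊕ Fin (r - 1))

/-- The ambient field: the fraction field of the polynomial ring over `k0` in all the
indeterminates. -/
abbrev Amb (k0 : Type) [Field k0] (r : ℕ) : Type :=
  FractionRing (MvPolynomial (TowerVars r) k0)

variable (k0 : Type) [Field k0] (r : ℕ)

/-- The indeterminate `Xₙ` as an element of the ambient field. -/
def ambX (n : ℕ) : Amb k0 r :=
  algebraMap (MvPolynomial (TowerVars r) k0) (Amb k0 r) (MvPolynomial.X (Sum.inl n))

/-- The indeterminate `Y` as an element of the ambient field. -/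
def ambY : Amb k0 r :=
  algebraMap (MvPolynomial (TowerVars r) k0) (Amb k0 r) (MvPolynomial.X (Sum.inr (Sum.inl ())))

/-- The indeterminates `Z₁, …, Z_{r-1}` as elements of the ambient field. -/
def ambZ (i : Fin (r - 1)) : Amb k0 r :=
  algebraMap (MvPolynomial (TowerVars r) k0) (Amb k0 r) (MvPolynomial.X (Sum.inr (Sum.inr i)))

/-- The image of the base field `k0` in the ambient field. -/
def baseSet : Set (Amb k0 r) :=
  Set.range fun c : k0 => algebraMap (MvPolynomial (TowerVars r) k0) (Amb k0 r) (MvPolynomial.C c)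

/-- `kₙ := k0(X₁, …, Xₙ)` as a subfield of the ambient field. -/
def kfld (n : ℕ) : Subfield (Amb k0 r) :=
  Subfield.closure (baseSet k0 r ∪ {x | ∃ i, 1 ≤ i ∧ i ≤ n ∧ x = ambX k0 r i})

/-- `Fₙ := kₙ(Z₁, …, Z_{r-1})`. -/
def Ffld (n : ℕ) : Subfield (Amb k0 r) :=
  Subfield.closure (↑(kfld k0 r n) ∪ Set.range (ambZ k0 r))

/-- `Kₙ := Fₙ(Y)`. -/
def Kfld (n : ℕ) : Subfield (Amb k0 r) :=
  Subfield.closure (↑(Ffld k0 r n) ∪ {ambY k0 r})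

/-- The polynomial ring `Fₙ[Y]` as a subring of the ambient field. -/
def polyRing (n : ℕ) : Subring (Amb k0 r) :=
  Subring.closure (↑(Ffld k0 r n) ∪ {ambY k0 r})

/-- `Vₙ := Fₙ[Y]_{(Y)}`, the localization of `Fₙ[Y]` at the prime `(Y)`, as a subset of
the ambient field. -/
def Vset (n : ℕ) : Set (Amb k0 r) :=
  {x | ∃ f ∈ polyRing k0 r n, ∃ g ∈ polyRing k0 r n,
    (¬ ∃ h ∈ polyRing k0 r n, g = ambY k0 r * h) ∧ x = f / g}

/-- `Mₙ := Y·Fₙ[Y]_{(Y)}`, the maximal ideal of `Vₙ`. -/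
def Mset (n : ℕ) : Set (Amb k0 r) :=
  {x | ∃ v ∈ Vset k0 r n, x = ambY k0 r * v}

/-- `Aₙ := kₙ + Mₙ`. -/
def Aset (n : ℕ) : Set (Amb k0 r) :=
  {x | ∃ c ∈ kfld k0 r n, ∃ m ∈ Mset k0 r n, x = c + m}

/-- `k := ⋃ₙ kₙ` as a subset of the ambient field. -/
def kfldU : Set (Amb k0 r) := ⋃ n, (kfld k0 r n : Set (Amb k0 r))

/-- `F := k(Z₁, …, Z_{r-1}) = ⋃ₙ Fₙ`. -/
def FfldU : Subfield (Amb k0 r) :=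
  Subfield.closure (kfldU k0 r ∪ Set.range (ambZ k0 r))

/-- `K := F(Y) = ⋃ₙ Kₙ`. -/
def KfldU : Subfield (Amb k0 r) :=
  Subfield.closure (↑(FfldU k0 r) ∪ {ambY k0 r})

/-- The polynomial ring `F[Y]`. -/
def polyRingU : Subring (Amb k0 r) :=
  Subring.closure (↑(FfldU k0 r) ∪ {ambY k0 r})

/-- `V := F[Y]_{(Y)}`. -/
def VsetU : Set (Amb k0 r) :=
  {x | ∃ f ∈ polyRingU k0 r, ∃ g ∈ polyRingU k0 r,
    (¬ ∃ h ∈ polyRingU k0 r, g = ambY k0 r * h) ∧ x = f / g}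

/-- `M := Y·F[Y]_{(Y)} = ⋃ₙ Mₙ`. -/
def MsetU : Set (Amb k0 r) :=
  {x | ∃ v ∈ VsetU k0 r, x = ambY k0 r * v}

/-- `A := k + M = ⋃ₙ Aₙ`. -/
def AsetU : Set (Amb k0 r) :=
  {x | ∃ c ∈ kfldU k0 r, ∃ m ∈ MsetU k0 r, x = c + m}

/-- `X′ₙ := (1 + Y·Xₙ)/Y`. -/
def ambX' (n : ℕ) : Amb k0 r :=
  (1 + ambY k0 r * ambX k0 r n) / ambY k0 r

/-- `1` belongs to the ideal of `W` generated by the coefficients of `g`, where `W` is a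
subring (given as a subset `S`) of the ambient field. -/
def unitContent (S : Set (Amb k0 r)) (g : Polynomial (Amb k0 r)) : Prop :=
  ∃ (t : Finset ℕ) (u : ℕ → Amb k0 r), (∀ i ∈ t, u i ∈ S) ∧ ∑ i ∈ t, u i * g.coeff i = 1

/-- The Nagata ring `W(T)` of a subring `W ⊆ Amb k0 r` (given as a subset `S`) in the
"variable" `T`: all fractions `f(T)/g(T)` with `f, g ∈ W[T]` and the coefficients of `g`
generating the unit ideal of `W`.  (When `T` is transcendental over `W` this is the usual
Nagata ring.) -/
def nagataSet (S : Set (Amb k0 r)) (T : Amb k0 r) : Set (Amb k0 r) :=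
  {x | ∃ f g : Polynomial (Amb k0 r), (∀ i, f.coeff i ∈ S) ∧ (∀ i, g.coeff i ∈ S) ∧
    unitContent k0 r S g ∧ x = f.eval T / g.eval T}

/-- The valuation overrings of a ring `D` (given as a subset) inside a subfield `L` of the
ambient field: subrings `W` with `D ⊆ W ⊆ L` such that for every `x ∈ L`, `x ∈ W` or
`x⁻¹ ∈ W`. -/
def valOverringsIn (D : Set (Amb k0 r)) (L : Subfield (Amb k0 r)) : Set (Subring (Amb k0 r)) :=
  {W | D ⊆ ↑W ∧ (W : Set (Amb k0 r)) ⊆ (L : Set (Amb k0 r)) ∧ ∀ x ∈ L, x ∈ W ∨ x⁻¹ ∈ W}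

/-- The Kronecker function ring `Kr_{L(T)}(D, b) = ⋂ {W(T) : W a valuation overring of `D`
in `L`}`, realized as a subset of the ambient field. -/
def krSet (D : Set (Amb k0 r)) (L : Subfield (Amb k0 r)) (T : Amb k0 r) : Set (Amb k0 r) :=
  ⋂ W ∈ valOverringsIn k0 r D L, nagataSet k0 r (↑W) T

/-- The tower `Dₙ`: `D₁ := A₁` and `Dₙ := Bₙ ∩ Aₙ` for `n ≥ 2`, where
`Bₙ := Kr_{K_{n-1}(X′ₙ)}(D_{n-1}, b)`.  (The value at `0` is junk, set to `D₁`.) -/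
def Dset : ℕ → Set (Amb k0 r)
  | 0 => Aset k0 r 1
  | 1 => Aset k0 r 1
  | n + 2 => krSet k0 r (Dset (n + 1)) (Kfld k0 r (n + 1)) (ambX' k0 r (n + 2)) ∩ Aset k0 r (n + 2)

/-- `Bₙ := Kr_{K_{n-1}(X′ₙ)}(D_{n-1}, b)` (meaningful for `n ≥ 2`). -/
def Bset (n : ℕ) : Set (Amb k0 r) :=
  krSet k0 r (Dset k0 r (n - 1)) (Kfld k0 r (n - 1)) (ambX' k0 r n)

/-- `𝓜ₙ := Mₙ ∩ Dₙ`. -/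
def MMset (n : ℕ) : Set (Amb k0 r) := Mset k0 r n ∩ Dset k0 r n

/-- `D := ⋃__{n ≥ 1} Dₙ`. -/
def DsetU : Set (Amb k0 r) := ⋃ n, Dset k0 r n

/-- `𝓜 := ⋃_{n ≥ 2} 𝓜ₙ`. -/
def MMsetU : Set (Amb k0 r) := ⋃ n, MMset k0 r (n + 2)

/-- The localization `D_m = {a/b : a, b ∈ D, b ∉ m}` of a subring `D` of the ambient
field (given as a subset) at (the complement of) a subset `m`. -/
def locAt (D m : Set (Amb k0 r)) : Set (Amb k0 r) :=
  {x | ∃ a ∈ D, ∃ b ∈ D, b ∉ m ∧ x = a / b}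

/-- The quotient field, inside the ambient field, of a subring given as a subset. -/
def qfSet (D : Set (Amb k0 r)) : Set (Amb k0 r) :=
  {x | ∃ a ∈ D, ∃ b ∈ D, b ≠ 0 ∧ x = a / b}

/-- The nonunits of a subring of the ambient field, given as a subset: in a local
subring of a field these form the maximal ideal. -/
def nonunitsIn (S : Set (Amb k0 r)) : Set (Amb k0 r) :=
  {x | x ∈ S ∧ (x = 0 ∨ x⁻¹ ∉ S)}

/-- A subring `A` of the ambient field is a pseudo-valuation domain: it is local, and its
maximal ideal (= set of nonunits) is also the maximal ideal of some valuation overring of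
`A` in its quotient field. -/
def IsPVDSub (A : Subring (Amb k0 r)) : Prop :=
  IsLocalRing ↥A ∧
  ∃ W : Subring (Amb k0 r), (A : Set (Amb k0 r)) ⊆ ↑W ∧
    (W : Set (Amb k0 r)) ⊆ qfSet k0 r ↑A ∧
    (∀ x ∈ qfSet k0 r (A : Set (Amb k0 r)), x ∈ W ∨ x⁻¹ ∈ W) ∧
    nonunitsIn k0 r ↑A = nonunitsIn k0 r ↑W

/-- The valuative dimension of a subring of the ambient field: the supremum of the Krull
dimensions of its valuation overrings (in its quotient field). -/
def subValuativeDim (A : Subring (Amb k0 r)) : WithBot ℕ∞ :=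
  ⨆ W : {W : Subring (Amb k0 r) // (A : Set (Amb k0 r)) ⊆ ↑W ∧
      (W : Set (Amb k0 r)) ⊆ qfSet k0 r ↑A ∧
      ∀ x ∈ qfSet k0 r (A : Set (Amb k0 r)), x ∈ W ∨ x⁻¹ ∈ W},
    ringKrullDim ↥(W : Subring (Amb k0 r))


/-- `1` belongs to the ideal generated by the coefficients of a multivariable polynomial
`g` in the subring given by the subset `S`. -/
def mvUnitContent (S : Set (Amb k0 r)) (g : MvPolynomial ℕ (Amb k0 r)) : Prop :=
  ∃ (t : Finset (ℕ →₀ ℕ)) (u : (ℕ →₀ ℕ) → Amb k0 r),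
    (∀ m ∈ t, u m ∈ S) ∧ ∑ m ∈ t, u m * MvPolynomial.coeff m g = 1

/-- The Nagata ring `W(T₀, T₁, …)` of a subring `W` of the ambient field (given as a
subset `S`) in countably many "variables" `T j`: all fractions `f(T)/g(T)` with
`f, g ∈ W[T₀, T₁, …]` and the coefficients of `g` generating the unit ideal of `W`. -/
def nagataSetMv (S : Set (Amb k0 r)) (T : ℕ → Amb k0 r) : Set (Amb k0 r) :=
  {x | ∃ f g : MvPolynomial ℕ (Amb k0 r),
    (∀ m, MvPolynomial.coeff m f ∈ S) ∧ (∀ m, MvPolynomial.coeff m g ∈ S) ∧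
    mvUnitContent k0 r S g ∧ x = MvPolynomial.eval T f / MvPolynomial.eval T g}

/-- A subring `S` of the ambient field is an *essential* domain: `S` is the intersection
of a family of localizations `S_p` at primes `p ∈ Δ`, each of which is a valuation domain
(with quotient field the quotient field of `S`). -/
def IsEssentialSub (S : Subring (Amb k0 r)) : Prop :=
  ∃ Δ : Set (Ideal ↥S),
    (∀ p ∈ Δ, p.IsPrime) ∧
    (∀ p ∈ Δ, ∀ x ∈ qfSet k0 r (S : Set (Amb k0 r)),
      x ∈ locAt k0 r ↑S (Subtype.val '' (p : Set ↥S)) ∨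
      x⁻¹ ∈ locAt k0 r ↑S (Subtype.val '' (p : Set ↥S))) ∧
    (S : Set (Amb k0 r)) = ⋂ p ∈ Δ, locAt k0 r ↑S (Subtype.val '' (p : Set ↥S))

end

/-!
For a set `D` and a field `L`, let the valuative dimension be the supremum of the lengths of the
chains of valuation overrings of `D` in `L`. The Kronecker function ring `B = Kr_{L(T)}(D, b)`
contains `f(T)/h(T)` as soon as every coefficient of `f` is a coefficient of `h`. Since `f + X^m g`
with `m > deg f` has all the coefficients of `f` and of `g`, two elements `x, y` of `B` generate the
same ideal as `x + T^m y`, so `B` is Bézout. The valuation overrings of `B` are its localizations at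
primes, and they are the Gauss extensions `V(T)` of the valuation overrings `V` of `D` in `L`; hence
the Krull dimension of `B` is the valuative dimension of `D`.

It remains to see that `Dₙ` has valuative dimension `r` in `Kₙ`. For `Aₙ = kₙ + Mₙ` this holds
because `Kₙ` has transcendence degree `r` over `kₙ`, while composing valuation rings of `Fₙ` with
the `Y`-adic one produces chains of length `r`. For `Dₙ = Bₙ ∩ Aₙ` put `u = 1/X′ₙ = Y/(1 + Y Xₙ)`,
which is a unit of `Bₙ` and a parameter of the `Y`-adic valuation ring. A valuation overring `W` of
`Dₙ` contains `Bₙ` if `u⁻¹ ∈ W`, since `u^m x ∈ Aₙ` for large `m`, and contains `Aₙ` otherwise,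
since for `x ∈ Aₙ` and large `m` the element `x / (1 + u^m x)` lies in `Bₙ ∩ Aₙ`. So the valuative
dimension of `Dₙ` is at most the larger of those of `D_{n-1}` and `Aₙ`, and it is at least that of
`Aₙ` because `Dₙ ⊆ Aₙ`.
-/

noncomputable section

open Polynomial IntermediateField

section Valuative

variable {Ω : Type*} [Field Ω]

/-- The valuation overrings of `D` in the field `L`, ordered by inclusion. The set `D` need not be
contained in `L`; only its elements lying in `L` matter. -/
abbrev ValOverring (D : Set Ω) (L : Subfield Ω) : Type _ :=
  {V : ValuationSubring L // ∀ x : L, (x : Ω) ∈ D → x ∈ V}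

instance ValOverring.instNonempty (D : Set Ω) (L : Subfield Ω) : Nonempty (ValOverring D L) :=
  ⟨⟨⊤, fun _ _ ↦ trivial⟩⟩

/-- The valuative dimension of `D` in the field `L`: the supremum of the lengths of the chains of
valuation overrings of `D` in `L`. -/
def valuativeDim (D : Set Ω) (L : Subfield Ω) : WithBot ℕ∞ :=
  Order.krullDim (ValOverring D L)

/-- The valuation ring of `L` cut out by a subring of the ambient field that contains every element
of `L` or its inverse. -/
def valuationSubringOfSubring (L : Subfield Ω) (R : Subring Ω) (h : ∀ x ∈ L, x ∈ R ∨ x⁻¹ ∈ R) :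
    ValuationSubring L where
  toSubring := R.comap L.subtype
  mem_or_inv_mem' x := h x x.2

theorem valuativeDim_nonneg (D : Set Ω) (L : Subfield Ω) : 0 ≤ valuativeDim D L :=
  Order.krullDim_nonneg

theorem valuativeDim_anti {D D' : Set Ω} (h : D ⊆ D') (L : Subfield Ω) :
    valuativeDim D' L ≤ valuativeDim D L :=
  Order.krullDim_le_of_strictMono (fun V ↦ ⟨V.1, fun x hx ↦ V.2 x (h hx)⟩) fun _ _ hVW ↦ hVW

end Valuative

section Nagata

variable {Ω : Type*} [Field Ω]

/-- The Nagata ring `R(T)`: the fractions `f(T)/g(T)` with `f, g ∈ R[X]` such that the coefficients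
of `g` generate the unit ideal of `R`. The condition `g(T) ≠ 0`, automatic for `T` transcendental
over `R`, is imposed so that the fractions form a ring for every `T`. -/
def nagataRing (R : Type*) [CommRing R] [Algebra R Ω] (T : Ω) : Subring Ω where
  carrier := {x | ∃ f g : R[X], g.contentIdeal = ⊤ ∧ aeval T g ≠ 0 ∧ x = aeval T f / aeval T g}
  one_mem' := ⟨1, 1, by simp, by simp, by simp⟩
  zero_mem' := ⟨0, 1, by simp, by simp, by simp⟩
  neg_mem' := by
    rintro _ ⟨f, g, hg, hg0, rfl⟩
    exact ⟨-f, g, hg, hg0, by simp [neg_div]⟩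
  add_mem' := by
    rintro _ _ ⟨f, g, hg, hg0, rfl⟩ ⟨f', g', hg', hg0', rfl⟩
    exact ⟨f * g' + g * f', g * g', contentIdeal_mul_eq_top_of_contentIdeal_eq_top hg hg',
      by simp [hg0, hg0'], by simp [div_add_div _ _ hg0 hg0']⟩
  mul_mem' := by
    rintro _ _ ⟨f, g, hg, hg0, rfl⟩ ⟨f', g', hg', hg0', rfl⟩
    exact ⟨f * f', g * g', contentIdeal_mul_eq_top_of_contentIdeal_eq_top hg hg',
      by simp [hg0, hg0'], by simp [div_mul_div_comm]⟩

theorem algebraMap_mem_nagataRing {R : Type*} [CommRing R] [Algebra R Ω] (T : Ω) (a : R) :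
    algebraMap R Ω a ∈ nagataRing R T :=
  ⟨C a, 1, by simp, by simp, by simp⟩

theorem aeval_ne_zero_of_contentIdeal_eq_top {R : Type*} [CommRing R] [Nontrivial R] [Algebra R Ω]
    {T : Ω} (hT : Transcendental R T) {g : R[X]} (hg : g.contentIdeal = ⊤) : aeval T g ≠ 0 := by
  rw [transcendental_iff] at hT
  intro h
  simp [hT g h] at hg

theorem exists_eq_C_mul_map_of_isBezout {R K : Type*} [CommRing R] [IsDomain R] [IsBezout R]
    [Field K] [Algebra R K] [IsFractionRing R K] {f : K[X]} (hf : f ≠ 0) :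
    ∃ c : K, c ≠ 0 ∧ ∃ g : R[X], g.contentIdeal = ⊤ ∧ f = C c * g.map (algebraMap R K) := by
  obtain ⟨b, hb, hbf⟩ := IsLocalization.integerNormalization_spec (nonZeroDivisors R) f
  set p := IsLocalization.integerNormalization (nonZeroDivisors R) f
  have hp : p.contentIdeal.IsPrincipal := IsBezout.isPrincipal_of_FG _ p.contentIdeal_FG
  obtain ⟨g, hg⟩ := hp.contentIdeal_generator_dvd
  set d := hp.generator
  have hp0 : p ≠ 0 := IsFractionRing.integerNormalization_eq_zero_iff.not.2 hf
  have hd0 : d ≠ 0 := by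
    rintro h
    exact hp0 (by rw [hg, h, C_0, zero_mul])
  have hb0 : algebraMap R K b ≠ 0 := IsFractionRing.to_map_ne_zero_of_mem_nonZeroDivisors hb
  refine ⟨algebraMap R K d / algebraMap R K b, ?_, g, ?_, ?_⟩
  · exact div_ne_zero ((map_ne_zero_iff _ (IsFractionRing.injective R K)).2 hd0) hb0
  · refine isPrimitive_iff_contentIdeal_eq_top g |>.1 fun r hr ↦ ?_
    have hdr : d ∈ Ideal.span {d * r} := by
      refine (hp.contentIdeal_le_span_iff_dvd _).2 ?_ (Submodule.IsPrincipal.generator_mem _)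
      rw [hg, C_mul]
      exact mul_dvd_mul_left _ hr
    exact isUnit_of_dvd_one ((mul_dvd_mul_iff_left hd0).1
      (by simpa using Ideal.mem_span_singleton.1 hdr))
  · have hbf' : C (algebraMap R K b) * f = C (algebraMap R K d) * g.map (algebraMap R K) := by
      rw [← smul_eq_C_mul, algebraMap_smul, ← hbf, hg, Polynomial.map_mul, map_C]
    rw [div_eq_inv_mul, C_mul, mul_assoc, ← hbf', ← mul_assoc, ← C_mul, inv_mul_cancel₀ hb0, C_1,
      one_mul]

variable {L : Subfield Ω} {T : Ω}

theorem exists_eq_aeval_div_aeval {x : Ω} (hx : x ∈ L⟮T⟯) :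
    ∃ f g : L[X], aeval T g ≠ 0 ∧ x = aeval T f / aeval T g := by
  obtain ⟨f, g, rfl⟩ := (mem_adjoin_simple_iff L x).1 hx
  by_cases hg : aeval T g = 0
  · exact ⟨0, 1, by simp, by simp [hg]⟩
  · exact ⟨f, g, hg, rfl⟩

theorem ne_zero_of_transcendental (hT : Transcendental L T) : T ≠ 0 := by
  rintro rfl
  exact hT isAlgebraic_zero

theorem transcendental_valuationSubring (hT : Transcendental L T) (V : ValuationSubring L) :
    Transcendental V T :=
  hT.restrictScalars (IsFractionRing.injective V L)

theorem exists_common_denominator {x y : Ω} (hx : x ∈ L⟮T⟯) (hy : y ∈ L⟮T⟯) :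
    ∃ f g d : L[X], x = aeval T f / aeval T d ∧ y = aeval T g / aeval T d := by
  obtain ⟨f, d, hd, rfl⟩ := exists_eq_aeval_div_aeval hx
  obtain ⟨g, e, he, rfl⟩ := exists_eq_aeval_div_aeval hy
  refine ⟨f * e, d * g, d * e, ?_, ?_⟩
  · simp [mul_div_mul_right _ _ he]
  · simp [mul_div_mul_left _ _ hd]

theorem exists_eq_mul_unit_nagataRing (hT : Transcendental L T) (V : ValuationSubring L) {x : Ω}
    (hx : x ∈ L⟮T⟯) (hx0 : x ≠ 0) :
    ∃ c : L, c ≠ 0 ∧ ∃ u ∈ nagataRing V T, u⁻¹ ∈ nagataRing V T ∧ x = c * u := by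
  obtain ⟨f, g, hg, rfl⟩ := exists_eq_aeval_div_aeval hx
  have hf : aeval T f ≠ 0 := (div_ne_zero_iff.1 hx0).1
  obtain ⟨a, ha, f', hf', rfl⟩ := exists_eq_C_mul_map_of_isBezout (R := V) (f := f) (by aesop)
  obtain ⟨b, hb, g', hg', rfl⟩ := exists_eq_C_mul_map_of_isBezout (R := V) (f := g) (by aesop)
  have hTV := transcendental_valuationSubring hT V
  refine ⟨a / b, div_ne_zero ha hb, aeval T f' / aeval T g',
    ⟨f', g', hg', aeval_ne_zero_of_contentIdeal_eq_top hTV hg', rfl⟩,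
    ⟨g', f', hf', aeval_ne_zero_of_contentIdeal_eq_top hTV hf', inv_div _ _⟩, ?_⟩
  simp only [map_mul, aeval_C, aeval_map_algebraMap, mul_div_mul_comm]
  rfl

theorem mem_nagataRing_or_inv_mem (hT : Transcendental L T) (V : ValuationSubring L) {x : Ω}
    (hx : x ∈ L⟮T⟯) : x ∈ nagataRing V T ∨ x⁻¹ ∈ nagataRing V T := by
  rcases eq_or_ne x 0 with rfl | hx0
  · exact .inl (zero_mem _)
  obtain ⟨c, -, u, hu, hu', rfl⟩ := exists_eq_mul_unit_nagataRing hT V hx hx0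
  rcases V.mem_or_inv_mem c with hc | hc
  · exact .inl (mul_mem (algebraMap_mem_nagataRing T (⟨c, hc⟩ : V)) hu)
  · right
    rw [mul_inv]
    exact mul_mem (algebraMap_mem_nagataRing T (⟨c⁻¹, hc⟩ : V)) hu'

theorem coe_mem_nagataRing_iff (hT : Transcendental L T) {V : ValuationSubring L} {c : L} :
    (c : Ω) ∈ nagataRing V T ↔ c ∈ V := by
  refine ⟨?_, fun hc ↦ algebraMap_mem_nagataRing T (⟨c, hc⟩ : V)⟩
  rintro ⟨f, g, hg, -, hfg⟩
  rcases eq_or_ne c 0 with rfl | hc0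
  · exact zero_mem V
  refine (V.mem_or_inv_mem c).elim id fun hc ↦ ?_
  let d : V := ⟨c⁻¹, hc⟩
  have hgf : g = C d * f := by
    refine transcendental_iff_injective.1 (transcendental_valuationSubring hT V) ?_
    have hd : algebraMap V Ω d = (c : Ω)⁻¹ := rfl
    rw [map_mul, aeval_C, hd, hfg, inv_div, div_mul_cancel₀]
    rintro h
    simp [h, hc0] at hfg
  have hd : IsUnit d := by
    rw [← Ideal.span_singleton_eq_top, ← contentIdeal_C]
    exact contentIdeal_eq_top_of_contentIdeal_mul_eq_top (hgf ▸ hg)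
  obtain ⟨e, he⟩ := hd.exists_right_inv
  have he' : c⁻¹ * e = 1 := congrArg Subtype.val he
  rw [(inv_mul_eq_one₀ hc0).1 he']
  exact e.2

theorem nagataRing_mono {V W : ValuationSubring L} (hVW : V ≤ W) :
    nagataRing V T ≤ nagataRing W T := by
  let φ : V →+* W := Subring.inclusion hVW
  have aeval_map (p : V[X]) : aeval T (p.map φ) = aeval T p := by
    simp only [aeval_def, eval₂_map]
    rfl
  rintro _ ⟨f, g, hg, hg0, rfl⟩
  refine ⟨f.map φ, g.map φ, ?_, ?_, ?_⟩
  · rw [contentIdeal_map_eq_map_contentIdeal, hg, Ideal.map_top]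
  · rwa [aeval_map]
  · rw [aeval_map, aeval_map]

theorem nagataRing_le_adjoin (V : ValuationSubring L) :
    nagataRing V T ≤ L⟮T⟯.toSubfield.toSubring := by
  rintro _ ⟨f, g, -, -, rfl⟩
  rw [← aeval_map_algebraMap L T f, ← aeval_map_algebraMap L T g]
  exact (mem_adjoin_simple_iff L _).2 ⟨_, _, rfl⟩

end Nagata

section Kronecker

variable {Ω : Type*} [Field Ω]

/-- The Kronecker function ring of `D` in `L(T)` with respect to the `b`-operation: the intersection
of the Nagata rings `V(T)` of the valuation overrings `V` of `D` in `L`. -/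
def kroneckerRing (D : Set Ω) (L : Subfield Ω) (T : Ω) : Subring Ω :=
  ⨅ V : ValOverring D L, nagataRing V.1 T

variable {D : Set Ω} {L : Subfield Ω} {T : Ω}

theorem kroneckerRing_le_nagataRing (V : ValOverring D L) :
    kroneckerRing D L T ≤ nagataRing V.1 T :=
  iInf_le _ V

theorem kroneckerRing_le_adjoin : kroneckerRing D L T ≤ L⟮T⟯.toSubfield.toSubring :=
  (kroneckerRing_le_nagataRing ⟨⊤, fun _ _ ↦ trivial⟩).trans (nagataRing_le_adjoin _)

theorem coe_mem_kroneckerRing (hT : Transcendental L T) {a : L} (ha : (a : Ω) ∈ D) :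
    (a : Ω) ∈ kroneckerRing D L T :=
  Subring.mem_iInf.2 fun V ↦ (coe_mem_nagataRing_iff hT).2 (V.2 a ha)

theorem aeval_div_aeval_mem_kroneckerRing (hT : Transcendental L T) {f h : L[X]}
    (hfh : f.coeffs ⊆ h.coeffs) : aeval T f / aeval T h ∈ kroneckerRing D L T := by
  rcases eq_or_ne h 0 with rfl | h0
  · simp
  refine Subring.mem_iInf.2 fun ⟨V, _⟩ ↦ ?_
  obtain ⟨c, hc, g, hg, rfl⟩ := exists_eq_C_mul_map_of_isBezout (R := V) h0
  obtain ⟨e, he⟩ : ∃ e : V[X], e.map (algebraMap V L) = C c⁻¹ * f := by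
    refine (lifts_iff_coeff_lifts _).2 fun n ↦ ?_
    rw [coeff_C_mul]
    by_cases hn : f.coeff n = 0
    · exact ⟨0, by simp [hn]⟩
    · obtain ⟨m, -, hm⟩ := mem_coeffs_iff.1 (hfh (coeff_mem_coeffs hn))
      exact ⟨g.coeff m, by simp [hm, hc]⟩
  have hf : f = C c * e.map (algebraMap V L) := by
    rw [he, ← mul_assoc, ← C_mul, mul_inv_cancel₀ hc, C_1, one_mul]
  have hg0 := aeval_ne_zero_of_contentIdeal_eq_top (transcendental_valuationSubring hT V) hg
  refine ⟨e, g, hg, hg0, ?_⟩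
  rw [hf, map_mul, map_mul, aeval_map_algebraMap, aeval_map_algebraMap, mul_div_mul_left]
  simpa using hc

theorem mem_kroneckerRing_self (hT : Transcendental L T) : T ∈ kroneckerRing D L T := by
  simpa using aeval_div_aeval_mem_kroneckerRing hT (D := D) (f := monomial 1 1)
    (h := monomial 0 1) (by simp only [coeffs_monomial _ one_ne_zero, subset_rfl])

theorem inv_mem_kroneckerRing_self (hT : Transcendental L T) : T⁻¹ ∈ kroneckerRing D L T := by
  simpa using aeval_div_aeval_mem_kroneckerRing hT (D := D) (f := monomial 0 1)
    (h := monomial 1 1) (by simp only [coeffs_monomial _ one_ne_zero, subset_rfl])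

theorem coeffs_subset_coeffs_add_X_pow_mul {R : Type*} [Semiring R] (f g : R[X]) {m : ℕ}
    (hm : f.natDegree < m) :
    f.coeffs ⊆ (f + X ^ m * g).coeffs ∧ g.coeffs ⊆ (f + X ^ m * g).coeffs := by
  constructor
  · intro c hc
    obtain ⟨n, hn, rfl⟩ := mem_coeffs_iff.1 hc
    have h : (f + X ^ m * g).coeff n = f.coeff n := by
      have := le_natDegree_of_mem_supp n hn
      simp [coeff_X_pow_mul', show ¬ m ≤ n by omega]
    rw [← h]
    exact coeff_mem_coeffs (by simpa [h] using hn)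
  · intro c hc
    obtain ⟨n, hn, rfl⟩ := mem_coeffs_iff.1 hc
    have h : (f + X ^ m * g).coeff (n + m) = g.coeff n := by
      simp [coeff_X_pow_mul, coeff_eq_zero_of_natDegree_lt (show f.natDegree < n + m by omega)]
    rw [← h]
    exact coeff_mem_coeffs (by simpa [h] using hn)

theorem aeval_add_X_pow_mul_ne_zero (hT : Transcendental L T) {f g : L[X]} {m : ℕ}
    (hm : f.natDegree < m) (hg : aeval T g ≠ 0) : aeval T (f + X ^ m * g) ≠ 0 := by
  refine (transcendental_iff.1 hT _).mt fun h ↦ hg ?_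
  simp [show g = 0 by simpa [h] using (coeffs_subset_coeffs_add_X_pow_mul f g hm).2]

theorem isBezout_kroneckerRing (hT : Transcendental L T) : IsBezout (kroneckerRing D L T) := by
  rw [IsBezout.iff_span_pair_isPrincipal]
  rintro ⟨x, hx⟩ ⟨y, hy⟩
  obtain ⟨f, g, d, rfl, rfl⟩ :=
    exists_common_denominator (kroneckerRing_le_adjoin hx) (kroneckerRing_le_adjoin hy)
  set m := f.natDegree + 1
  obtain ⟨hf, hg⟩ := coeffs_subset_coeffs_add_X_pow_mul f g (m := m) f.natDegree.lt_succ_self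
  let t : kroneckerRing D L T := ⟨T, mem_kroneckerRing_self hT⟩
  set z : kroneckerRing D L T := ⟨_, hx⟩ + t ^ m * ⟨_, hy⟩
  have hz : (z : Ω) = aeval T (f + X ^ m * g) / aeval T d := by
    simp [z, t, add_div, mul_div_assoc]
  have mem_span {p : L[X]} (hp : p.coeffs ⊆ (f + X ^ m * g).coeffs)
      (hpd : aeval T p / aeval T d ∈ kroneckerRing D L T) : ⟨_, hpd⟩ ∈ Ideal.span {z} := by
    refine Ideal.mem_span_singleton'.2
      ⟨⟨_, aeval_div_aeval_mem_kroneckerRing hT hp⟩, Subtype.ext ?_⟩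
    rw [Subring.coe_mul, hz]
    rcases eq_or_ne (f + X ^ m * g) 0 with h0 | h0
    · simp [show p = 0 by simpa [h0] using hp]
    · exact div_mul_div_cancel₀ ((transcendental_iff.1 hT _).mt h0)
  refine ⟨z, le_antisymm ?_ ?_⟩
  · exact Ideal.span_le.2 (Set.insert_subset (mem_span hf hx)
      (Set.singleton_subset_iff.2 (mem_span hg hy)))
  · exact (Ideal.span_singleton_le_iff_mem _).2 (Ideal.mem_span_pair.2 ⟨1, t ^ m, by rw [one_mul]⟩)

end Kronecker

section BezoutDimension

variable {R K : Type*} [CommRing R] [Field K] [Algebra R K]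

/-- The center on `R` of a valuation ring containing `R`, as a point of the spectrum. -/
def valuationCenter (V : ValuationSubring K) (hV : ∀ a : R, algebraMap R K a ∈ V) :
    PrimeSpectrum R :=
  ⟨(IsLocalRing.maximalIdeal V).comap ((algebraMap R K).codRestrict V hV), inferInstance⟩

theorem mem_valuationCenter {V : ValuationSubring K} {hV : ∀ a : R, algebraMap R K a ∈ V} {a : R} :
    a ∈ (valuationCenter V hV).asIdeal ↔ algebraMap R K a ∈ V.nonunits :=
  ValuationSubring.coe_mem_nonunits_iff.symm

variable [IsDomain R] [IsBezout R] [IsFractionRing R K]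

theorem exists_isCoprime_eq_div (x : K) :
    ∃ a b : R, IsCoprime a b ∧ x = algebraMap R K a / algebraMap R K b := by
  classical
  let := IsBezout.toGCDDomain R
  obtain ⟨a, b, hb, rfl⟩ := IsFractionRing.div_surjective (A := R) x
  obtain ⟨a', b', ha', hb', h⟩ := extract_gcd a b
  refine ⟨a', b', (gcd_isUnit_iff a' b').1 h, ?_⟩
  have hd : algebraMap R K (gcd a b) ≠ 0 := by
    refine (map_ne_zero_iff _ (IsFractionRing.injective R K)).2 fun h0 ↦
      nonZeroDivisors.ne_zero hb ?_
    rw [hb', h0, zero_mul]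
  calc algebraMap R K a / algebraMap R K b
      = algebraMap R K (gcd a b * a') / algebraMap R K (gcd a b * b') := by rw [← ha', ← hb']
    _ = algebraMap R K a' / algebraMap R K b' := by rw [map_mul, map_mul, mul_div_mul_left _ _ hd]

theorem valuationCenter_le_iff {V W : ValuationSubring K} {hV : ∀ a : R, algebraMap R K a ∈ V}
    {hW : ∀ a : R, algebraMap R K a ∈ W} :
    valuationCenter W hW ≤ valuationCenter V hV ↔ V ≤ W := by
  constructor
  · intro h x hx
    obtain ⟨a, b, ⟨u, v, huv⟩, rfl⟩ := exists_isCoprime_eq_div (R := R) x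
    by_cases hb : b ∈ (valuationCenter W hW).asIdeal
    · rcases eq_or_ne (algebraMap R K b) 0 with hb0 | hb0
      · simp [hb0]
      have ha : a ∈ (valuationCenter V hV).asIdeal := by
        rw [mem_valuationCenter, ← div_mul_cancel₀ (algebraMap R K a) hb0,
          ValuationSubring.mem_nonunits_iff, map_mul]
        exact mul_lt_one_of_nonneg_of_lt_one_right ((V.valuation_le_one_iff _).2 hx) zero_le
          (mem_valuationCenter.1 (h hb))
      refine absurd ?_ (valuationCenter V hV).isPrime.one_notMem
      rw [← huv]
      exact add_mem (Ideal.mul_mem_left _ u ha) (Ideal.mul_mem_left _ v (h hb))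
    · rw [mem_valuationCenter, ValuationSubring.mem_nonunits_iff_or, not_or, not_not] at hb
      rw [div_eq_mul_inv]
      exact mul_mem (hW a) hb.2
  · exact fun h a ha ↦ mem_valuationCenter.2
      (ValuationSubring.nonunits_le_nonunits.2 h (mem_valuationCenter.1 ha))

/-- The localization of a Bézout domain at a prime ideal, as a valuation ring of the fraction
field. -/
def valuationSubringAtPrime (K : Type*) [Field K] [Algebra R K] [IsFractionRing R K] (P : Ideal R)
    [P.IsPrime] : ValuationSubring K where
  toSubring := (Localization.subalgebra.ofField K P.primeCompl
    P.primeCompl_le_nonZeroDivisors).toSubring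
  mem_or_inv_mem' x := by
    obtain ⟨a, b, ⟨u, v, huv⟩, rfl⟩ := exists_isCoprime_eq_div (R := R) x
    by_cases hb : b ∈ P
    · refine .inr ⟨b, a, fun ha ↦ ‹P.IsPrime›.one_notMem ?_, by rw [inv_div, div_eq_mul_inv]⟩
      rw [← huv]
      exact add_mem (P.mul_mem_left u ha) (P.mul_mem_left v hb)
    · exact .inl ⟨a, b, hb, div_eq_mul_inv _ _⟩

theorem mem_valuationSubringAtPrime {P : Ideal R} [P.IsPrime] {x : K} :
    x ∈ valuationSubringAtPrime K P ↔
      ∃ a b : R, b ∉ P ∧ x = algebraMap R K a / algebraMap R K b := by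
  simp only [div_eq_mul_inv]
  exact ⟨fun ⟨a, b, hb, h⟩ ↦ ⟨a, b, hb, h⟩, fun ⟨a, b, hb, h⟩ ↦ ⟨a, b, hb, h⟩⟩

theorem algebraMap_mem_valuationSubringAtPrime (P : Ideal R) [P.IsPrime] (a : R) :
    algebraMap R K a ∈ valuationSubringAtPrime K P :=
  Subalgebra.algebraMap_mem _ a

theorem valuationCenter_valuationSubringAtPrime (P : PrimeSpectrum R) :
    valuationCenter (valuationSubringAtPrime K P.asIdeal)
      (algebraMap_mem_valuationSubringAtPrime P.asIdeal) = P := by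
  ext a
  rw [mem_valuationCenter, ValuationSubring.mem_nonunits_iff_or, ← not_iff_not, not_or, not_not,
    mem_valuationSubringAtPrime, map_eq_zero_iff _ (IsFractionRing.injective R K)]
  constructor
  · rintro ⟨ha, b, c, hc, h⟩ haP
    have hab : a * b = c := IsFractionRing.injective R K <| by
      have hc0 : algebraMap R K c ≠ 0 :=
        (map_ne_zero_iff _ (IsFractionRing.injective R K)).2 fun h0 ↦ hc (h0 ▸ zero_mem _)
      have ha0 : algebraMap R K a ≠ 0 := (map_ne_zero_iff _ (IsFractionRing.injective R K)).2 ha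
      field_simp at h
      rw [map_mul, h]
    exact hc (hab ▸ P.asIdeal.mul_mem_right b haP)
  · rintro ha
    refine ⟨fun h ↦ ha (h ▸ zero_mem _), 1, a, ha, by simp⟩

theorem ringKrullDim_eq_krullDim_valuationSubring :
    ringKrullDim R =
      Order.krullDim {V : ValuationSubring K // ∀ a : R, algebraMap R K a ∈ V} := by
  let e : {V : ValuationSubring K // ∀ a : R, algebraMap R K a ∈ V} ↪o (PrimeSpectrum R)ᵒᵈ :=
    .ofMapLEIff (fun V ↦ OrderDual.toDual (valuationCenter V.1 V.2)) fun _ _ ↦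
      valuationCenter_le_iff
  have he : Function.Surjective e := fun P ↦
    ⟨⟨_, algebraMap_mem_valuationSubringAtPrime P.ofDual.asIdeal⟩,
      valuationCenter_valuationSubringAtPrime P.ofDual⟩
  rw [ringKrullDim, ← Order.krullDim_orderDual]
  exact (Order.krullDim_eq_of_orderIso (RelIso.ofSurjective e he)).symm

theorem ringKrullDim_eq_valuativeDim {Ω : Type*} [Field Ω] {B : Subring Ω} [IsBezout B]
    {M : Subfield Ω} (hBM : B ≤ M.toSubring) (hM : ∀ x ∈ M, ∃ a ∈ B, ∃ b ∈ B, x = a / b) :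
    ringKrullDim B = valuativeDim B M := by
  let : Algebra B M := (Subring.inclusion hBM).toAlgebra
  have : FaithfulSMul B M := (faithfulSMul_iff_algebraMap_injective B M).2
    (Subring.inclusion_injective hBM)
  have : IsFractionRing B M := by
    refine IsFractionRing.of_field B M fun x ↦ ?_
    obtain ⟨a, ha, b, hb, h⟩ := hM x x.2
    exact ⟨⟨a, ha⟩, ⟨b, hb⟩, Subtype.ext h⟩
  rw [ringKrullDim_eq_krullDim_valuationSubring (K := M), valuativeDim]
  refine congrArg (fun p : ValuationSubring M → Prop ↦ Order.krullDim {V // p V})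
    (funext fun V ↦ propext ?_)
  exact ⟨fun h x hx ↦ h ⟨x, hx⟩, fun h a ↦ h _ a.2⟩

end BezoutDimension

section KroneckerDimension

variable {Ω : Type*} [Field Ω] {D : Set Ω} {L : Subfield Ω} {T : Ω}

theorem exists_eq_div_of_mem_adjoin (hT : Transcendental L T) {x : Ω} (hx : x ∈ L⟮T⟯) :
    ∃ a ∈ kroneckerRing D L T, ∃ b ∈ kroneckerRing D L T, x = a / b := by
  obtain ⟨f, g, hg, rfl⟩ := exists_eq_aeval_div_aeval hx
  set h := f + X ^ (f.natDegree + 1) * g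
  obtain ⟨hfh, hgh⟩ := coeffs_subset_coeffs_add_X_pow_mul f g f.natDegree.lt_succ_self
  have hh : aeval T h ≠ 0 := aeval_add_X_pow_mul_ne_zero hT f.natDegree.lt_succ_self hg
  exact ⟨_, aeval_div_aeval_mem_kroneckerRing hT hfh, _, aeval_div_aeval_mem_kroneckerRing hT hgh,
    (div_div_div_cancel_right₀ hh _ _).symm⟩

theorem ringKrullDim_kroneckerRing (hT : Transcendental L T) :
    ringKrullDim (kroneckerRing D L T) = valuativeDim (kroneckerRing D L T) L⟮T⟯.toSubfield :=
  have := isBezout_kroneckerRing (D := D) hT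
  ringKrullDim_eq_valuativeDim kroneckerRing_le_adjoin fun _ hx ↦ exists_eq_div_of_mem_adjoin hT hx

/-- The valuation ring `V(T)` of `L(T)`, the trivial (Gauss) extension of the valuation ring `V` of
`L`. -/
def gaussExtension (hT : Transcendental L T) (V : ValuationSubring L) :
    ValuationSubring L⟮T⟯.toSubfield :=
  valuationSubringOfSubring _ (nagataRing V T) fun _ hx ↦ mem_nagataRing_or_inv_mem hT V hx

theorem gaussExtension_le_iff (hT : Transcendental L T) {V W : ValuationSubring L} :
    gaussExtension hT V ≤ gaussExtension hT W ↔ V ≤ W := by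
  refine ⟨fun h c hc ↦ (coe_mem_nagataRing_iff hT).1 ?_, fun h _ hx ↦ nagataRing_mono h hx⟩
  have hcT : (c : Ω) ∈ L⟮T⟯.toSubfield := L⟮T⟯.algebraMap_mem c
  exact h (x := ⟨c, hcT⟩) ((coe_mem_nagataRing_iff hT).2 hc)

theorem nagataRing_le_of_kroneckerRing_le (hT : Transcendental L T) {V : ValuationSubring L}
    {R : Subring Ω} (hR : kroneckerRing D L T ≤ R) (hV : ∀ c ∈ V, (c : Ω) ∈ R) :
    nagataRing V T ≤ R := by
  rintro _ ⟨f, g, hg, -, rfl⟩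
  have hf : aeval T f ∈ R := by
    rw [aeval_eq_sum_range]
    exact sum_mem fun i _ ↦
      mul_mem (hV _ (f.coeff i).2) (pow_mem (hR (mem_kroneckerRing_self hT)) i)
  have hgc : ∀ c ∈ g.contentIdeal, (c : Ω) / aeval T g ∈ R := by
    intro c hc
    induction hc using Submodule.span_induction with
    | mem c hc =>
      obtain ⟨n, hn, rfl⟩ := mem_coeffs_iff.1 hc
      have hn0 : (g.map (algebraMap V L)).coeff n ≠ 0 := by simpa using hn
      have hsub : (monomial 0 ((g.map (algebraMap V L)).coeff n)).coeffs ⊆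
          (g.map (algebraMap V L)).coeffs := by
        simpa only [coeffs_monomial 0 hn0, Finset.singleton_subset_iff] using coeff_mem_coeffs hn0
      have hmem := hR (aeval_div_aeval_mem_kroneckerRing hT hsub)
      rwa [aeval_map_algebraMap, monomial_zero_left, aeval_C, coeff_map] at hmem
    | zero => simp
    | add c d _ _ hc hd =>
      rw [Subring.coe_add, Subfield.coe_add, add_div]
      exact add_mem hc hd
    | smul a c _ hc =>
      rw [smul_eq_mul, Subring.coe_mul, Subfield.coe_mul, mul_div_assoc]
      exact mul_mem (hV a a.2) hc
  rw [div_eq_mul_one_div]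
  exact mul_mem hf (by simpa using hgc 1 (hg ▸ Submodule.mem_top))

theorem gaussExtension_comap (hT : Transcendental L T)
    (W : ValOverring (kroneckerRing D L T : Set Ω) L⟮T⟯.toSubfield) :
    gaussExtension hT (W.1.comap (algebraMap L L⟮T⟯)) = W.1 := by
  set R : Subring Ω := W.1.toSubring.map L⟮T⟯.toSubfield.subtype
  set V : ValuationSubring L := W.1.comap (algebraMap L L⟮T⟯)
  have hVR : nagataRing V T ≤ R := nagataRing_le_of_kroneckerRing_le hT (D := D)
    (fun x hx ↦ ⟨⟨x, kroneckerRing_le_adjoin hx⟩, W.2 _ hx, rfl⟩) fun c hc ↦ ⟨_, hc, rfl⟩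
  have mem_W {x : L⟮T⟯.toSubfield} (hx : (x : Ω) ∈ R) : x ∈ W.1 := by
    obtain ⟨y, hy, hyx⟩ := hx
    exact Subtype.ext hyx ▸ hy
  refine le_antisymm (fun x hx ↦ mem_W (hVR hx)) fun x hx ↦ ?_
  rcases eq_or_ne x 0 with rfl | hx0
  · exact zero_mem _
  obtain ⟨c, -, u, hu, hu', hxu⟩ :=
    exists_eq_mul_unit_nagataRing hT V x.2 (Subtype.coe_ne_coe.2 hx0)
  have hc : c ∈ V := by
    refine mem_W (x := algebraMap L L⟮T⟯ c) (?_ : (c : Ω) ∈ R)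
    have hu0 : u ≠ 0 := by
      rintro rfl
      exact hx0 (Subtype.ext (by rw [hxu, mul_zero]; rfl))
    rw [← mul_inv_cancel_right₀ hu0 (c : Ω), ← hxu]
    exact mul_mem ⟨x, hx, rfl⟩ (hVR hu')
  change (x : Ω) ∈ nagataRing V T
  rw [hxu]
  exact mul_mem ((coe_mem_nagataRing_iff hT).2 hc) hu

theorem valuativeDim_kroneckerRing (hT : Transcendental L T) :
    valuativeDim (kroneckerRing D L T) L⟮T⟯.toSubfield = valuativeDim D L := by
  let e : ValOverring D L ↪o ValOverring (kroneckerRing D L T : Set Ω) L⟮T⟯.toSubfield :=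
    .ofMapLEIff (fun V ↦ ⟨gaussExtension hT V.1, fun _ hx ↦ kroneckerRing_le_nagataRing V hx⟩)
      fun _ _ ↦ gaussExtension_le_iff hT
  refine (Order.krullDim_eq_of_orderIso (RelIso.ofSurjective e fun W ↦ ?_)).symm
  exact ⟨⟨W.1.comap (algebraMap L L⟮T⟯), fun a ha ↦ W.2 _ (coe_mem_kroneckerRing hT ha)⟩,
    Subtype.ext (gaussExtension_comap hT W)⟩

end KroneckerDimension

section Intersection

variable {Ω : Type*} [Field Ω] {M : Subfield Ω}

theorem valuativeDim_inter_le_max {D D' : Set Ω}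
    (h : ∀ W : ValOverring (D ∩ D') M,
      (∀ x : M, (x : Ω) ∈ D → x ∈ W.1) ∨ ∀ x : M, (x : Ω) ∈ D' → x ∈ W.1) :
    valuativeDim (D ∩ D') M ≤ max (valuativeDim D M) (valuativeDim D' M) := by
  refine iSup_le fun p ↦ ?_
  have length_le {S : Set Ω} (hS : ∀ x : M, (x : Ω) ∈ S → x ∈ p.head.1) :
      (p.length : WithBot ℕ∞) ≤ valuativeDim S M :=
    Order.LTSeries.length_le_krullDim (α := ValOverring S M)
      { length := p.length
        toFun i := ⟨(p i).1, fun x hx ↦ p.head_le i (hS x hx)⟩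
        step i := p.step i }
  exact (h p.head).elim (fun hD ↦ le_max_of_le_left (length_le hD))
    fun hD' ↦ le_max_of_le_right (length_le hD')

theorem le_or_le_of_valOverring_inter {A B : Subring Ω} {u : Ω} (huM : u ∈ M) (hu0 : u ≠ 0)
    (huA : u ∈ A) (huB : u ∈ B) (hA : ∀ x ∈ M, ∃ m, u ^ m * x ∈ A)
    (hA' : ∀ a ∈ A, (1 + u * a)⁻¹ ∈ A)
    (hB : ∀ x ∈ M, ∃ n, 1 + u ^ (n + 1) * x ≠ 0 ∧ (1 + u ^ (n + 1) * x)⁻¹ * x ∈ B)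
    (W : ValOverring (B ∩ A : Set Ω) M) :
    (∀ x : M, (x : Ω) ∈ B → x ∈ W.1) ∨ ∀ x : M, (x : Ω) ∈ A → x ∈ W.1 := by
  lift u to M using huM
  by_cases huW : u⁻¹ ∈ W.1
  · refine .inl fun x hx ↦ ?_
    obtain ⟨m, hm⟩ := hA x x.2
    have hxW : u ^ m * x ∈ W.1 := W.2 _ ⟨mul_mem (pow_mem huB m) hx, hm⟩
    rw [← inv_mul_cancel_left₀ (pow_ne_zero m (Subtype.coe_ne_coe.1 hu0)) x, ← inv_pow]
    exact mul_mem (pow_mem huW m) hxW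
  · refine .inr fun x hx ↦ ?_
    obtain ⟨n, hs0, hsx⟩ := hB x x.2
    replace hs0 : 1 + u ^ (n + 1) * x ≠ 0 := Subtype.coe_ne_coe.1 hs0
    set s : M := (1 + u ^ (n + 1) * x)⁻¹
    have hsA : (s : Ω) ∈ A := by
      have := hA' _ (mul_mem (pow_mem huA n) hx)
      rwa [← mul_assoc, ← pow_succ'] at this
    have hsxW : s * x ∈ W.1 := W.2 _ ⟨hsx, mul_mem hsA hx⟩
    have hu1 : W.1.valuation (u ^ (n + 1) * (s * x)) < 1 := by
      have hu : W.1.valuation u < 1 :=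
        W.1.mem_nonunits_iff_or.2 (.inr huW)
      rw [map_mul, map_pow]
      exact mul_lt_one_of_nonneg_of_lt_one_left zero_le (pow_lt_one₀ zero_le hu n.succ_ne_zero)
        ((W.1.valuation_le_one_iff _).2 hsxW)
    have hs1 : s = 1 - u ^ (n + 1) * (s * x) := by
      rw [mul_left_comm, eq_sub_iff_add_eq, ← mul_one_add, inv_mul_cancel₀ hs0]
    have hs1' : s⁻¹ ∈ W.1 := by
      rw [← W.1.valuation_le_one_iff, map_inv₀, hs1, Valuation.map_one_sub_of_lt _ hu1, inv_one]
    rw [← inv_mul_cancel_left₀ (inv_ne_zero hs0) x]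
    exact mul_mem hs1' hsxW

end Intersection

section KroneckerIntersection

variable {Ω : Type*} [Field Ω] {D : Set Ω} {L : Subfield Ω} {T : Ω}

theorem exists_inv_one_add_mul_mem_kroneckerRing (hT : Transcendental L T) {x : Ω}
    (hx : x ∈ L⟮T⟯) :
    ∃ n, 1 + T⁻¹ ^ (n + 1) * x ≠ 0 ∧ (1 + T⁻¹ ^ (n + 1) * x)⁻¹ * x ∈ kroneckerRing D L T := by
  obtain ⟨f, g, hg, rfl⟩ := exists_eq_aeval_div_aeval hx
  set h := f + X ^ (f.natDegree + 1) * g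
  have hT0 := ne_zero_of_transcendental hT
  have hh : aeval T h ≠ 0 := aeval_add_X_pow_mul_ne_zero hT f.natDegree.lt_succ_self hg
  have heq : 1 + T⁻¹ ^ (f.natDegree + 1) * (aeval T f / aeval T g) =
      aeval T h / (T ^ (f.natDegree + 1) * aeval T g) := by
    simp only [h, map_add, map_mul, map_pow, aeval_X, inv_pow]
    field_simp
    ring
  refine ⟨f.natDegree, ?_, ?_⟩
  · rw [heq]
    exact div_ne_zero hh (mul_ne_zero (pow_ne_zero _ hT0) hg)
  · have hmem : aeval T f / aeval T h ∈ kroneckerRing D L T :=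
      aeval_div_aeval_mem_kroneckerRing hT
        (coeffs_subset_coeffs_add_X_pow_mul f g f.natDegree.lt_succ_self).1
    rw [heq, inv_div, mul_div_assoc, mul_assoc, mul_comm (_ / _), div_mul_div_cancel₀ hg]
    exact mul_mem (pow_mem (mem_kroneckerRing_self hT) _) hmem

theorem valuativeDim_kroneckerRing_inter_le (hT : Transcendental L T) {A : Subring Ω}
    (hTA : T⁻¹ ∈ A) (hA : ∀ x ∈ L⟮T⟯, ∃ m, T⁻¹ ^ m * x ∈ A)
    (hA' : ∀ a ∈ A, (1 + T⁻¹ * a)⁻¹ ∈ A) :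
    valuativeDim (kroneckerRing D L T ∩ A : Set Ω) L⟮T⟯.toSubfield ≤
      max (valuativeDim D L) (valuativeDim A L⟮T⟯.toSubfield) := by
  rw [← valuativeDim_kroneckerRing hT]
  exact valuativeDim_inter_le_max <| le_or_le_of_valOverring_inter
    (inv_mem (mem_adjoin_simple_self L T)) (inv_ne_zero (ne_zero_of_transcendental hT)) hTA
    (inv_mem_kroneckerRing_self hT) hA hA' fun _ hx ↦ exists_inv_one_add_mul_mem_kroneckerRing hT hx

end KroneckerIntersection

section Pullback

variable {Ω : Type*} [Field Ω]

/-- The pullback `(S ∩ E) + tE[t]_{(t)}`, written as the ring of the fractions `f(t)/g(t)` with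
`f, g ∈ E[X]`, `f(0) ∈ S` and `g(0) = 1`. The condition `g(t) ≠ 0`, automatic for `t` transcendental
over `E`, is imposed so that the fractions form a ring for every `t`. -/
def pullbackRing (S : Subring Ω) (E : Subfield Ω) (t : Ω) : Subring Ω where
  carrier := {x | ∃ f g : E[X], (f.coeff 0 : Ω) ∈ S ∧ g.coeff 0 = 1 ∧ aeval t g ≠ 0 ∧
    x = aeval t f / aeval t g}
  one_mem' := ⟨1, 1, by simp [S.one_mem], by simp, by simp, by simp⟩
  zero_mem' := ⟨0, 1, by simp, by simp, by simp, by simp⟩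
  neg_mem' := by
    rintro _ ⟨f, g, hf, hg, hg0, rfl⟩
    exact ⟨-f, g, by simpa using hf, hg, hg0, by simp [neg_div]⟩
  add_mem' := by
    rintro _ _ ⟨f, g, hf, hg, hg0, rfl⟩ ⟨f', g', hf', hg', hg0', rfl⟩
    exact ⟨f * g' + g * f', g * g', by simpa [mul_coeff_zero, hg, hg'] using add_mem hf hf',
      by simp [mul_coeff_zero, hg, hg'], by simp [hg0, hg0'], by simp [div_add_div _ _ hg0 hg0']⟩
  mul_mem' := by
    rintro _ _ ⟨f, g, hf, hg, hg0, rfl⟩ ⟨f', g', hf', hg', hg0', rfl⟩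
    exact ⟨f * f', g * g', by simpa [mul_coeff_zero] using mul_mem hf hf',
      by simp [mul_coeff_zero, hg, hg'], by simp [hg0, hg0'], by simp [div_mul_div_comm]⟩

variable {S : Subring Ω} {E : Subfield Ω} {t : Ω}

theorem pullbackRing_mono {S' : Subring Ω} (h : S ≤ S') :
    pullbackRing S E t ≤ pullbackRing S' E t := by
  rintro _ ⟨f, g, hf, hg⟩
  exact ⟨f, g, h hf, hg⟩

theorem pullbackRing_le_adjoin : pullbackRing S E t ≤ E⟮t⟯.toSubfield.toSubring := by
  rintro _ ⟨f, g, -, -, -, rfl⟩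
  exact (mem_adjoin_simple_iff E _).2 ⟨f, g, rfl⟩

theorem aeval_ne_zero_of_coeff_zero_eq_one (ht : Transcendental E t) {g : E[X]}
    (hg : g.coeff 0 = 1) : aeval t g ≠ 0 := by
  refine (transcendental_iff.1 ht g).mt ?_
  rintro rfl
  simp at hg

theorem coe_mem_pullbackRing_iff (ht : Transcendental E t) {c : E} :
    (c : Ω) ∈ pullbackRing S E t ↔ (c : Ω) ∈ S := by
  refine ⟨?_, fun hc ↦ ⟨C c, 1, by simpa using hc, by simp, by simp, ?_⟩⟩
  · rintro ⟨f, g, hf, hg, hg0, h⟩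
    have hfg : C c * g = f := transcendental_iff_injective.1 ht <| by
      rw [map_mul, aeval_C, ← div_mul_cancel₀ (aeval t f) hg0, ← h]
      rfl
    rw [← hfg] at hf
    simpa [mul_coeff_zero, hg] using hf
  · rw [map_one, div_one, aeval_C]
    rfl

theorem inv_notMem_pullbackRing (ht : Transcendental E t) : t⁻¹ ∉ pullbackRing S E t := by
  rintro ⟨f, g, -, hg, hg0, h⟩
  have hfg : g = X * f := transcendental_iff_injective.1 ht <| by
    rw [map_mul, aeval_X, ← div_mul_cancel₀ (aeval t f) hg0, ← h,
      mul_inv_cancel_left₀ (ne_zero_of_transcendental ht)]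
  simp [hfg] at hg

theorem exists_eq_X_pow_mul_C_mul {K : Type*} [Field K] {f : K[X]} (hf : f ≠ 0) :
    ∃ (n : ℕ) (a : K) (g : K[X]), a ≠ 0 ∧ g.coeff 0 = 1 ∧ f = X ^ n * (C a * g) := by
  obtain ⟨g, hg, hXg⟩ := exists_eq_pow_rootMultiplicity_mul_and_not_dvd f hf 0
  rw [C_0, sub_zero] at hg hXg
  rw [X_dvd_iff] at hXg
  exact ⟨_, g.coeff 0, C (g.coeff 0)⁻¹ * g, hXg, by simp [hXg],
    by rwa [← mul_assoc (C _), ← C_mul, mul_inv_cancel₀ hXg, C_1, one_mul]⟩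

theorem aeval_X_pow_mul_div_mem_pullbackRing (ht : Transcendental E t) {m n : ℕ} (hmn : n ≤ m)
    {a b : E} (hab : m = n → (a : Ω) / b ∈ S) {f g : E[X]} (hf : f.coeff 0 = 1)
    (hg : g.coeff 0 = 1) :
    aeval t (X ^ m * (C a * f)) / aeval t (X ^ n * (C b * g)) ∈ pullbackRing S E t := by
  refine ⟨X ^ (m - n) * (C (a / b) * f), g, ?_, hg, aeval_ne_zero_of_coeff_zero_eq_one ht hg, ?_⟩
  · rcases hmn.eq_or_lt with rfl | hlt
    · simpa [hf] using hab rfl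
    · simp [mul_coeff_zero, coeff_X_pow, (Nat.sub_pos_of_lt hlt).ne]
  · have htn : t ^ n ≠ 0 := pow_ne_zero n (ne_zero_of_transcendental ht)
    obtain ⟨k, rfl⟩ := Nat.exists_eq_add_of_le hmn
    simp only [map_mul, map_pow, aeval_X, aeval_C, pow_add, map_div₀, Nat.add_sub_cancel_left]
    rw [mul_assoc, mul_div_mul_left _ _ htn, mul_div_assoc, mul_div_mul_comm, mul_div_assoc,
      mul_div_assoc]

theorem mem_pullbackRing_or_inv_mem (ht : Transcendental E t) (hS : ∀ c : E, ↑c ∈ S ∨ ↑c⁻¹ ∈ S)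
    {x : Ω} (hx : x ∈ E⟮t⟯) : x ∈ pullbackRing S E t ∨ x⁻¹ ∈ pullbackRing S E t := by
  obtain ⟨f, g, hg, rfl⟩ := exists_eq_aeval_div_aeval hx
  rcases eq_or_ne f 0 with rfl | hf
  · simp
  obtain ⟨m, a, f', ha, hf', rfl⟩ := exists_eq_X_pow_mul_C_mul hf
  obtain ⟨n, b, g', -, hg', rfl⟩ := exists_eq_X_pow_mul_C_mul (f := g) (by aesop)
  rw [inv_div]
  rcases lt_trichotomy n m with h | rfl | h
  · exact .inl (aeval_X_pow_mul_div_mem_pullbackRing ht h.le (by omega) hf' hg')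
  · exact (hS (a / b)).imp
      (fun h ↦ aeval_X_pow_mul_div_mem_pullbackRing ht le_rfl (fun _ ↦ by simpa using h) hf' hg')
      (fun h ↦ aeval_X_pow_mul_div_mem_pullbackRing ht le_rfl (fun _ ↦ by simpa using h) hg' hf')
  · exact .inr (aeval_X_pow_mul_div_mem_pullbackRing ht h.le (by omega) hg' hf')

/-- The valuation ring `V + tE[t]_{(t)}` of `E(t)`, the composite of the valuation ring `V` of `E`
with the `t`-adic valuation. -/
def compositeValuation (ht : Transcendental E t) (V : ValuationSubring E) :
    ValuationSubring E⟮t⟯.toSubfield :=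
  valuationSubringOfSubring _ (pullbackRing (V.toSubring.map E.subtype) E t) fun _ hx ↦
    mem_pullbackRing_or_inv_mem ht (fun c ↦ (V.mem_or_inv_mem c).imp
      (Subring.mem_map.2 ⟨_, ·, rfl⟩) (Subring.mem_map.2 ⟨_, ·, rfl⟩)) hx

theorem compositeValuation_le_iff (ht : Transcendental E t) {V W : ValuationSubring E} :
    compositeValuation ht V ≤ compositeValuation ht W ↔ V ≤ W := by
  refine ⟨fun h c hc ↦ ?_, fun h _ hx ↦
    pullbackRing_mono ((Subring.gc_map_comap E.subtype).monotone_l h) hx⟩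
  have hct : (c : Ω) ∈ E⟮t⟯.toSubfield := E⟮t⟯.algebraMap_mem c
  have hcV : (c : Ω) ∈ pullbackRing (V.toSubring.map E.subtype) E t :=
    (coe_mem_pullbackRing_iff ht).2 ⟨c, hc, rfl⟩
  obtain ⟨d, hd, hdc⟩ := (coe_mem_pullbackRing_iff ht).1 (h (x := ⟨c, hct⟩) hcV)
  exact Subtype.ext hdc ▸ hd

theorem compositeValuation_lt_top (ht : Transcendental E t) (V : ValuationSubring E) :
    compositeValuation ht V < ⊤ := by
  refine lt_top_iff_ne_top.2 fun h ↦ inv_notMem_pullbackRing ht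
    (S := V.toSubring.map E.subtype) ?_
  have ht' : t⁻¹ ∈ E⟮t⟯.toSubfield := inv_mem (mem_adjoin_simple_self E t)
  exact (h.symm ▸ ValuationSubring.mem_top _ : (⟨t⁻¹, ht'⟩ : E⟮t⟯.toSubfield) ∈ _)

theorem valuativeDim_add_one_le_pullbackRing (ht : Transcendental E t) (hS : S ≤ E.toSubring) :
    valuativeDim S E + 1 ≤ valuativeDim (pullbackRing S E t) E⟮t⟯.toSubfield := by
  have le_map (V : ValOverring (S : Set Ω) E) : S ≤ V.1.toSubring.map E.subtype :=
    fun c hc ↦ ⟨⟨c, hS hc⟩, V.2 _ hc, rfl⟩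
  let e : WithTop (ValOverring (S : Set Ω) E) →
      ValOverring (pullbackRing S E t : Set Ω) E⟮t⟯.toSubfield
    | ⊤ => ⟨⊤, fun _ _ ↦ trivial⟩
    | (V : ValOverring (S : Set Ω) E) =>
      ⟨compositeValuation ht V.1, fun _ hx ↦ pullbackRing_mono (le_map V) hx⟩
  rw [valuativeDim, ← Order.krullDim_WithTop]
  refine Order.krullDim_le_of_strictMono e fun V W h ↦ ?_
  induction V with
  | top => exact absurd h not_top_lt
  | coe V =>
    induction W with
    | top => exact compositeValuation_lt_top ht V.1
    | coe W =>
      exact (lt_iff_lt_of_le_iff_le' (compositeValuation_le_iff ht)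
        (compositeValuation_le_iff ht)).2 (WithTop.coe_lt_coe.1 h : V < W)

end Pullback

section LocalParameter

variable {Ω : Type*} [Field Ω] {S : Subring Ω} {E : Subfield Ω} {t : Ω}

theorem aeval_div_aeval_mem_pullbackRing (ht : Transcendental E t) {f g : E[X]}
    (hf : (f.coeff 0 : Ω) ∈ S) (hg : g.coeff 0 = 1) : aeval t f / aeval t g ∈ pullbackRing S E t :=
  ⟨f, g, hf, hg, aeval_ne_zero_of_coeff_zero_eq_one ht hg, rfl⟩

theorem aeval_one_add_X_mul_C (z : E) : aeval t (1 + X * C z) = 1 + t * (z : Ω) := by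
  simp only [map_add, map_one, map_mul, aeval_X, aeval_C]
  rfl

theorem one_add_mul_coe_ne_zero (ht : Transcendental E t) (z : E) : 1 + t * (z : Ω) ≠ 0 :=
  aeval_one_add_X_mul_C (t := t) z ▸ aeval_ne_zero_of_coeff_zero_eq_one ht (by simp)

theorem div_one_add_mul_mem_pullbackRing (ht : Transcendental E t) (z : E) :
    t / (1 + t * z) ∈ pullbackRing S E t := by
  have h := aeval_div_aeval_mem_pullbackRing ht (S := S) (f := X) (g := 1 + X * C z)
    (by simp) (by simp)
  rwa [aeval_X, aeval_one_add_X_mul_C] at h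

theorem exists_pow_mul_mem_pullbackRing (ht : Transcendental E t) (z : E) {x : Ω}
    (hx : x ∈ E⟮t⟯) : ∃ m, (t / (1 + t * z)) ^ m * x ∈ pullbackRing S E t := by
  obtain ⟨f, g, hg, rfl⟩ := exists_eq_aeval_div_aeval hx
  obtain ⟨n, b, g', -, hg', rfl⟩ := exists_eq_X_pow_mul_C_mul (f := g) (by aesop)
  have h := aeval_div_aeval_mem_pullbackRing ht (S := S) (f := X * (C b⁻¹ * f))
    (g := (1 + X * C z) ^ (n + 1) * g') (by simp)
    (by rw [coeff_zero_eq_eval_zero] at hg' ⊢; simp [hg'])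
  have ht0 : t ≠ 0 := ne_zero_of_transcendental ht
  have hz := one_add_mul_coe_ne_zero ht z
  refine ⟨n + 1, ?_⟩
  convert h using 1
  simp only [map_mul, map_pow, map_inv₀, aeval_X, aeval_C, aeval_one_add_X_mul_C, div_pow] at hg ⊢
  field_simp
  ring

theorem inv_one_add_mul_mem_pullbackRing (ht : Transcendental E t) (z : E) {a : Ω}
    (ha : a ∈ pullbackRing S E t) : (1 + t / (1 + t * z) * a)⁻¹ ∈ pullbackRing S E t := by
  obtain ⟨f, g, -, hg, hg0, rfl⟩ := ha
  have h := aeval_div_aeval_mem_pullbackRing ht (S := S) (f := (1 + X * C z) * g)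
    (g := (1 + X * C z) * g + X * f) (by simp [mul_coeff_zero, hg, S.one_mem])
    (by simp [mul_coeff_zero, hg])
  have hz := one_add_mul_coe_ne_zero ht z
  convert h using 1
  rw [map_add, map_mul, map_mul, aeval_X, aeval_one_add_X_mul_C]
  field_simp

end LocalParameter

section UpperBound

theorem algebraicIndependent_of_injective_valuation {ι k K Γ₀ : Type*} [Field k] [Field K]
    [Algebra k K] [LinearOrderedCommGroupWithZero Γ₀] {v : Valuation K Γ₀}
    (hv : ∀ c : k, c ≠ 0 → v (algebraMap k K c) = 1) {z : ι → K}
    (hz : Function.Injective fun a : ι →₀ ℕ ↦ v (a.prod fun i n ↦ z i ^ n)) :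
    AlgebraicIndependent k z := by
  classical
  have monomial_ne_zero (a : ι →₀ ℕ) : v (a.prod fun i n ↦ z i ^ n) ≠ 0 := fun ha ↦ by
    have h : a + a = a := hz <| by
      simp only [Finsupp.prod_add_index' (fun i ↦ pow_zero (z i)) (fun i ↦ pow_add (z i)),
        map_mul, ha, zero_mul]
    simp [add_eq_left.1 h] at ha
  refine algebraicIndependent_iff.2 fun p hp ↦ by_contra fun hp0 ↦ ?_
  have valuation_term {a : ι →₀ ℕ} (ha : a ∈ p.support) :
      v (algebraMap k K (p.coeff a) * a.prod fun i n ↦ z i ^ n) =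
        v (a.prod fun i n ↦ z i ^ n) := by
    rw [map_mul, hv _ (MvPolynomial.mem_support_iff.1 ha), one_mul]
  obtain ⟨a, ha, hmax⟩ := p.support.exists_max_image (fun a ↦ v (a.prod fun i n ↦ z i ^ n))
    (MvPolynomial.support_nonempty.2 hp0)
  rw [MvPolynomial.aeval_def, MvPolynomial.eval₂_eq] at hp
  have hsum := v.map_sum_eq_of_lt ha
    (f := fun a ↦ algebraMap k K (p.coeff a) * a.prod fun i n ↦ z i ^ n) fun b hb ↦ by
      obtain ⟨hb, hba⟩ := Finset.mem_sdiff.1 hb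
      rw [valuation_term ha, valuation_term hb]
      exact (hmax b hb).lt_of_ne (hz.ne (by simpa using hba))
  rw [valuation_term ha] at hsum
  exact monomial_ne_zero a (hsum ▸ (congrArg v hp).trans (map_zero v))

variable {K : Type*} [Field K]

/- The exponents of `z i` are compared for `i` from the top down: over `V i.castSucc` the earlier
`z j`, `j < i`, are units, and the exponents of the later ones are already known to agree. -/
theorem injective_valuation_prod_pow {l : ℕ} {V : Fin (l + 1) → ValuationSubring K}
    (hV : Monotone V) {z : Fin l → K} (hz0 : ∀ i, z i ≠ 0)
    (hz : ∀ i, z i ∈ (V i.castSucc).nonunits) (hz' : ∀ i, (z i)⁻¹ ∈ V i.succ) :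
    Function.Injective fun a : Fin l →₀ ℕ ↦ (V 0).valuation (a.prod fun i n ↦ z i ^ n) := by
  intro a b hab
  ext i
  induction i using WellFoundedGT.induction with
  | _ i ih =>
  set w := (V i.castSucc).valuation
  have w_eq_one (j) (hj : j < i) : w (z j) = 1 := by
    have hVj : V j.succ ≤ V i.castSucc := hV hj
    refine le_antisymm (((V i.castSucc).valuation_le_one_iff _).2 ?_) ?_
    · exact hV (Fin.castSucc_le_castSucc_iff.2 hj.le) ((V j.castSucc).nonunits_subset (hz j))
    · rw [← inv_le_one₀ (by simp [w, zero_lt_iff, hz0]), ← map_inv₀]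
      exact ((V i.castSucc).valuation_le_one_iff _).2 (hVj (hz' j))
  have hw : ∏ j, w (z j) ^ a j = ∏ j, w (z j) ^ b j := by
    have := congrArg (ValuationSubring.mapOfLE _ _ (hV (Fin.zero_le i.castSucc))) hab
    simpa [Finsupp.prod_fintype] using this
  rw [← Finset.mul_prod_erase _ _ (Finset.mem_univ i),
    ← Finset.mul_prod_erase _ (fun j ↦ w (z j) ^ b j) (Finset.mem_univ i),
    Finset.prod_congr rfl fun j hj ↦ ?_] at hw
  · refine pow_right_injective₀ ?_ ((V i.castSucc).mem_nonunits_iff.1 (hz i)).ne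
      (mul_right_cancel₀ ?_ hw)
    all_goals simp [w, zero_lt_iff, Finset.prod_ne_zero_iff, hz0]
  · obtain hji | hji := (Finset.ne_of_mem_erase hj).lt_or_gt
    · simp [w_eq_one j hji]
    · rw [ih j hji]

theorem exists_algebraicIndependent_of_strictMono {k : Type*} [Field k] [Algebra k K] {l : ℕ}
    {V : Fin (l + 1) → ValuationSubring K} (hV : StrictMono V)
    (hk : ∀ c : k, algebraMap k K c ∈ V 0) : ∃ z : Fin l → K, AlgebraicIndependent k z := by
  choose y hy hy' using fun i : Fin l ↦ SetLike.exists_of_lt (hV i.castSucc_lt_succ)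
  have hy0 (i) : y i ≠ 0 := fun h ↦ hy' i (h ▸ zero_mem _)
  refine ⟨fun i ↦ (y i)⁻¹, algebraicIndependent_of_injective_valuation (fun c hc ↦ ?_)
    (injective_valuation_prod_pow hV.monotone (fun i ↦ inv_ne_zero (hy0 i)) (fun i ↦ ?_)
      fun i ↦ (inv_inv (y i)).symm ▸ hy i)⟩
  · have hle (d : k) : (V 0).valuation (algebraMap k K d) ≤ 1 :=
      ((V 0).valuation_le_one_iff _).2 (hk d)
    refine (hle c).antisymm ?_
    rw [← inv_le_one₀ (by simp [zero_lt_iff, hc]), ← map_inv₀, ← map_inv₀]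
    exact hle c⁻¹
  · exact (ValuationSubring.inv_mem_nonunits_iff _).2 (.inr (hy' i))

variable {Ω k : Type*} [Field Ω] [Field k] [Algebra k Ω]

theorem valuativeDim_le_trdeg (L : IntermediateField k Ω) :
    valuativeDim (Set.range (algebraMap k Ω)) L.toSubfield ≤
      (Algebra.trdeg k L).toENat := by
  refine iSup_le fun p ↦ ?_
  obtain ⟨z, hz⟩ := exists_algebraicIndependent_of_strictMono (K := L)
    (V := fun i ↦ (p i).1) (fun _ _ hij ↦ p.strictMono hij) (fun c ↦ p.head.2 _ ⟨c, rfl⟩)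
  have h : (p.length : Cardinal) ≤ Algebra.trdeg k L := by
    simpa using hz.lift_cardinalMk_le_trdeg
  exact_mod_cast (Cardinal.toENat_nat _).symm.le.trans (OrderHomClass.mono Cardinal.toENat h)

open scoped IntermediateField.algebraAdjoinAdjoin in
theorem trdeg_adjoin_le (S : Set Ω) : Algebra.trdeg k (adjoin k S) ≤ Cardinal.mk S := by
  set S' : Set (adjoin k S) := (↑) ⁻¹' S
  have htop : adjoin k S' = ⊤ := by
    apply IntermediateField.lift_injective (adjoin k S)
    rw [lift_adjoin, IntermediateField.lift_top]
    exact congrArg (adjoin k) (Subtype.coe_image_of_subset (subset_adjoin k S))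
  have : Algebra.IsAlgebraic (Algebra.adjoin k S') (adjoin k S) := by
    rw [← isAlgebraic_adjoin_iff_top, htop]
    infer_instance
  exact (Algebra.IsAlgebraic.trdeg_le_cardinalMk k S').trans
    (Cardinal.mk_preimage_of_injective _ S Subtype.val_injective)

theorem valuativeDim_adjoin_le (S : Set Ω) :
    valuativeDim (Set.range (algebraMap k Ω)) (adjoin k S).toSubfield ≤ S.encard :=
  (valuativeDim_le_trdeg _).trans <|
    WithBot.coe_le_coe.2 (OrderHomClass.mono Cardinal.toENat (trdeg_adjoin_le S))

end UpperBound

section LowerBound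

variable {Ω : Type*} [Field Ω]

theorem valuativeDim_add_one_le_adjoin_simple {S : Subring Ω} {E : Subfield Ω} {t : Ω}
    (ht : Transcendental E t) (hS : S ≤ E.toSubring) :
    valuativeDim S E + 1 ≤ valuativeDim S E⟮t⟯.toSubfield :=
  (valuativeDim_add_one_le_pullbackRing ht hS).trans <|
    valuativeDim_anti (fun c hc ↦ (coe_mem_pullbackRing_iff ht (c := ⟨c, hS hc⟩)).2 hc) _

theorem card_le_valuativeDim_adjoin {ι k : Type*} [Field k] [Algebra k Ω] {x : ι → Ω}
    (hx : AlgebraicIndependent k x) (t : Finset ι) :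
    (t.card : WithBot ℕ∞) ≤
      valuativeDim (Set.range (algebraMap k Ω)) (adjoin k (x '' t)).toSubfield := by
  classical
  induction t using Finset.induction_on with
  | empty => simpa using valuativeDim_nonneg _ _
  | insert i t hi ih =>
    set E := (adjoin k (x '' t)).toSubfield
    have hE : E⟮x i⟯.toSubfield = (adjoin k (x '' ↑(insert i t))).toSubfield := by
      rw [Finset.coe_insert, Set.image_insert_eq, Set.insert_eq, Set.union_comm]
      exact congrArg IntermediateField.toSubfield (adjoin_adjoin_left k (x '' t) {x i})
    have hxi : Transcendental E (x i) :=
      transcendental_adjoin_iff.2 (hx.transcendental_adjoin (by simpa using hi))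
    rw [Finset.card_insert_of_notMem hi, ← hE]
    push_cast
    exact (add_le_add_left ih 1).trans <| valuativeDim_add_one_le_adjoin_simple
      (S := (algebraMap k Ω).range) hxi
      (Set.range_subset_iff.2 (adjoin k (x '' t)).algebraMap_mem)

end LowerBound

section AdjoinUnion

variable {Ω : Type*} [Field Ω]

theorem closure_coe_union (L : Subfield Ω) (S : Set Ω) :
    Subfield.closure (↑L ∪ S) = (adjoin L S).toSubfield := by
  rw [adjoin_toSubfield]
  exact congrArg (fun R ↦ Subfield.closure (R ∪ S)) Subtype.range_coe.symm

theorem closure_adjoin_union {k : Type*} [Field k] [Algebra k Ω] (S T : Set Ω) :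
    Subfield.closure (↑(adjoin k S).toSubfield ∪ T) = (adjoin k (S ∪ T)).toSubfield := by
  rw [closure_coe_union, ← adjoin_adjoin_left]
  rfl

theorem adjoin_simple_add_coe {E : Subfield Ω} (t : Ω) (c : E) : E⟮t + c⟯ = E⟮t⟯ := by
  have hc (s : Ω) : (c : Ω) ∈ E⟮s⟯ := E⟮s⟯.algebraMap_mem c
  apply le_antisymm <;> rw [adjoin_simple_le_iff]
  · exact add_mem (mem_adjoin_simple_self E t) (hc t)
  · simpa using sub_mem (mem_adjoin_simple_self E (t + c)) (hc (t + c))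

theorem transcendental_add_coe {E : Subfield Ω} {t : Ω} (ht : Transcendental E t) (c : E) :
    Transcendental E (t + c) := by
  refine fun h ↦ ht ?_
  rw [← add_sub_cancel_right t (c : Ω)]
  exact h.sub (isAlgebraic_algebraMap c)

end AdjoinUnion

section TowerFields

variable (k0 : Type) [Field k0] (r : ℕ)

/-- The indeterminates `Xₙ`, `Y`, `Zᵢ` as a single family of elements of the ambient field. -/
def ambVar (i : TowerVars r) : Amb k0 r :=
  algebraMap (MvPolynomial (TowerVars r) k0) (Amb k0 r) (MvPolynomial.X i)

/-- The subfield of the ambient field generated over `k0` by a set of indeterminates. -/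
def varField (s : Set (TowerVars r)) : Subfield (Amb k0 r) :=
  (adjoin k0 (ambVar k0 r '' s)).toSubfield

theorem algebraicIndependent_ambVar : AlgebraicIndependent k0 (ambVar k0 r) :=
  (MvPolynomial.algebraicIndependent_X (TowerVars r) k0).map'
    (f := IsScalarTower.toAlgHom k0 (MvPolynomial (TowerVars r) k0) (Amb k0 r))
    (IsFractionRing.injective _ _)

theorem transcendental_varField_ambVar {s : Set (TowerVars r)} {i : TowerVars r} (hi : i ∉ s) :
    Transcendental (varField k0 r s) (ambVar k0 r i) :=
  transcendental_adjoin_iff.2 ((algebraicIndependent_ambVar k0 r).transcendental_adjoin hi)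

theorem algebraicIndependent_varField_ambVar {ι : Type*} {s : Set (TowerVars r)}
    {f : ι → TowerVars r} (hf : Function.Injective f) (hs : ∀ i, f i ∉ s) :
    AlgebraicIndependent (varField k0 r s) (ambVar k0 r ∘ f) :=
  (algebraicIndependent_adjoin_iff.2 ((algebraicIndependent_ambVar k0 r).adjoin_of_disjoint
    disjoint_compl_right)).comp (fun i ↦ (⟨f i, hs i⟩ : ↥sᶜ))
      fun _ _ h ↦ hf (congrArg Subtype.val h)

theorem closure_varField_union (s t : Set (TowerVars r)) :
    Subfield.closure (↑(varField k0 r s) ∪ ambVar k0 r '' t) = varField k0 r (s ∪ t) := by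
  rw [varField, closure_adjoin_union, ← Set.image_union, varField]

theorem adjoin_simple_varField (s : Set (TowerVars r)) (i : TowerVars r) :
    (varField k0 r s)⟮ambVar k0 r i⟯.toSubfield = varField k0 r (insert i s) := by
  rw [← closure_coe_union, ← Set.image_singleton, closure_varField_union, Set.union_singleton]

variable (n : ℕ)

theorem kfld_eq_varField : kfld k0 r n = varField k0 r (Sum.inl '' Set.Icc 1 n) := by
  rw [kfld, varField, adjoin_toSubfield]
  congr 2
  ext x
  simp [ambX, ambVar, and_assoc, eq_comm]

theorem Ffld_eq_varField : Ffld k0 r n =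
    varField k0 r (Sum.inl '' Set.Icc 1 n ∪ Set.range fun i ↦ Sum.inr (Sum.inr i)) := by
  rw [Ffld, kfld_eq_varField, ← closure_varField_union, ← Set.range_comp]
  rfl

theorem Ffld_eq_adjoin :
    Ffld k0 r n = (adjoin (kfld k0 r n) (Set.range (ambZ k0 r))).toSubfield :=
  closure_coe_union _ _

theorem Kfld_eq_adjoin_simple : Kfld k0 r n = (Ffld k0 r n)⟮ambY k0 r⟯.toSubfield :=
  closure_coe_union _ _

theorem Kfld_eq_adjoin : Kfld k0 r n =
    (adjoin (kfld k0 r n) (Set.range (ambZ k0 r) ∪ {ambY k0 r})).toSubfield := by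
  rw [Kfld, Ffld_eq_adjoin, closure_adjoin_union]

theorem Kfld_eq_varField :
    Kfld k0 r n = varField k0 r (Sum.inl '' Set.Icc 1 n ∪ Set.range Sum.inr) := by
  have h : (Set.range Sum.inr : Set (TowerVars r)) =
      (Set.range fun i ↦ Sum.inr (Sum.inr i)) ∪ {Sum.inr (Sum.inl ())} := by
    ext (_ | _ | _) <;> simp
  rw [Kfld, Ffld_eq_varField, h, ← Set.union_assoc,
    ← closure_varField_union k0 r _ {Sum.inr (Sum.inl ())}, Set.image_singleton]
  rfl

theorem transcendental_ambY : Transcendental (Ffld k0 r n) (ambY k0 r) := by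
  rw [Ffld_eq_varField]
  exact transcendental_varField_ambVar k0 r (by simp)

theorem algebraicIndependent_ambZ : AlgebraicIndependent (kfld k0 r n) (ambZ k0 r) := by
  rw [kfld_eq_varField]
  exact algebraicIndependent_varField_ambVar k0 r (f := fun i ↦ Sum.inr (Sum.inr i))
    (Sum.inr_injective.comp Sum.inr_injective) (by simp)

theorem inv_ambY_mem_Kfld : (ambY k0 r)⁻¹ ∈ Kfld k0 r n :=
  inv_mem (Subfield.subset_closure (.inr rfl))

theorem ambX'_eq_ambX_add_inv : ambX' k0 r n = ambX k0 r n + (ambY k0 r)⁻¹ := by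
  have hY : ambY k0 r ≠ 0 := ne_zero_of_transcendental (transcendental_ambY k0 r n)
  rw [ambX', add_div, mul_div_cancel_left₀ _ hY, one_div, add_comm]

theorem transcendental_ambX' : Transcendental (Kfld k0 r n) (ambX' k0 r (n + 1)) := by
  rw [ambX'_eq_ambX_add_inv]
  refine transcendental_add_coe (c := ⟨_, inv_ambY_mem_Kfld k0 r n⟩) ?_
  rw [Kfld_eq_varField]
  exact transcendental_varField_ambVar k0 r (by simp)

theorem Kfld_succ : Kfld k0 r (n + 1) = (Kfld k0 r n)⟮ambX' k0 r (n + 1)⟯.toSubfield := by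
  have h := adjoin_simple_add_coe (ambX k0 r (n + 1)) ⟨_, inv_ambY_mem_Kfld k0 r n⟩
  rw [ambX'_eq_ambX_add_inv, h, Kfld_eq_varField k0 r n]
  refine Eq.trans ?_ (adjoin_simple_varField k0 r _ (Sum.inl (n + 1))).symm
  rw [Kfld_eq_varField, ← Set.insert_union, ← Set.image_insert_eq,
    Set.insert_Icc_right_eq_Icc_add_one (by simp)]

end TowerFields

section KroneckerNagataSets

variable (k0 : Type) [Field k0] (r : ℕ)

theorem unitContent_map_iff {R : Type*} [CommRing R] [Algebra R (Amb k0 r)]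
    (hR : Function.Injective (algebraMap R (Amb k0 r))) {g : R[X]} :
    unitContent k0 r (algebraMap R (Amb k0 r)).range (g.map (algebraMap R (Amb k0 r))) ↔
      g.contentIdeal = ⊤ := by
  classical
  rw [Ideal.eq_top_iff_one]
  constructor
  · rintro ⟨s, u, hu, hsum⟩
    choose! v hv using hu
    have h : ∑ i ∈ s, v i * g.coeff i = 1 := hR <| by
      rw [map_one, ← hsum, map_sum]
      refine Finset.sum_congr rfl fun i hi ↦ ?_
      rw [map_mul, hv i hi, coeff_map]
    exact h ▸ sum_mem fun i _ ↦ Ideal.mul_mem_left _ _ (coeff_mem_contentIdeal g i)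
  · intro h
    rw [contentIdeal_def, coeffs, Finset.coe_image] at h
    obtain ⟨c, hc⟩ := (Submodule.mem_span_image_finset_iff_exists_fun' R).1 h
    refine ⟨g.support, fun i ↦ algebraMap R _ (c i), fun i _ ↦ ⟨c i, rfl⟩, ?_⟩
    simpa using congrArg (algebraMap R (Amb k0 r)) hc

theorem nagataSet_range_algebraMap {R : Type*} [CommRing R] [Algebra R (Amb k0 r)] {T : Amb k0 r}
    (hT : Transcendental R T) :
    nagataSet k0 r (algebraMap R (Amb k0 r)).range T = nagataRing R T := by
  have : Nontrivial R := (algebraMap R (Amb k0 r)).domain_nontrivial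
  have hR : Function.Injective (algebraMap R (Amb k0 r)) := fun a b hab ↦
    C_injective (transcendental_iff_injective.1 hT (by simpa using hab))
  have mem_range (f : R[X]) (i : ℕ) :
      (f.map (algebraMap R (Amb k0 r))).coeff i ∈ (algebraMap R (Amb k0 r)).range :=
    ⟨f.coeff i, (coeff_map _ _).symm⟩
  ext x
  constructor
  · rintro ⟨f, g, hf, hg, hfg, rfl⟩
    obtain ⟨f, rfl⟩ := (mem_map_range _).2 hf
    obtain ⟨g, rfl⟩ := (mem_map_range _).2 hg
    simp only [coe_mapRingHom] at hfg ⊢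
    rw [unitContent_map_iff k0 r hR] at hfg
    refine ⟨f, g, hfg, aeval_ne_zero_of_contentIdeal_eq_top hT hfg, ?_⟩
    rw [eval_map_algebraMap, eval_map_algebraMap]
  · rintro ⟨f, g, hg, -, rfl⟩
    refine ⟨f.map _, g.map _, mem_range f, mem_range g, (unitContent_map_iff k0 r hR).2 hg, ?_⟩
    rw [eval_map_algebraMap, eval_map_algebraMap]

variable {k0 r} {L : Subfield (Amb k0 r)}

theorem valuationSubring_range_mem_valOverringsIn {D : Set (Amb k0 r)} (hD : D ⊆ L)
    (V : ValOverring D L) : (algebraMap V.1 (Amb k0 r)).range ∈ valOverringsIn k0 r D L := by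
  refine ⟨fun x hx ↦ ⟨⟨⟨x, hD hx⟩, V.2 _ hx⟩, rfl⟩, ?_, fun x hx ↦ ?_⟩
  · rintro _ ⟨c, rfl⟩
    exact c.1.2
  · exact (V.1.mem_or_inv_mem ⟨x, hx⟩).imp (fun h ↦ ⟨⟨_, h⟩, rfl⟩) (fun h ↦ ⟨⟨_, h⟩, rfl⟩)

theorem range_algebraMap_valuationSubringOfSubring {R : Subring (Amb k0 r)} (hR : R ≤ L.toSubring)
    (h : ∀ x ∈ L, x ∈ R ∨ x⁻¹ ∈ R) :
    (algebraMap (valuationSubringOfSubring L R h) (Amb k0 r)).range = R := by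
  ext x
  constructor
  · rintro ⟨c, rfl⟩
    exact c.2
  · exact fun hx ↦ ⟨⟨⟨x, hR hx⟩, hx⟩, rfl⟩

theorem krSet_eq_kroneckerRing {D : Set (Amb k0 r)} (hD : D ⊆ L) {T : Amb k0 r}
    (hT : Transcendental L T) : krSet k0 r D L T = kroneckerRing D L T := by
  have nagataSet_eq (V : ValuationSubring L) :
      nagataSet k0 r (algebraMap V (Amb k0 r)).range T = nagataRing V T :=
    nagataSet_range_algebraMap k0 r (transcendental_valuationSubring hT V)
  rw [kroneckerRing, Subring.coe_iInf, krSet]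
  refine subset_antisymm (Set.subset_iInter fun V ↦ ?_) (Set.subset_iInter₂ fun R hR ↦ ?_)
  · rw [← nagataSet_eq]
    exact Set.biInter_subset_of_mem (valuationSubring_range_mem_valOverringsIn hD V)
  · obtain ⟨hDR, hRL, hR⟩ := hR
    rw [← range_algebraMap_valuationSubringOfSubring hRL hR, nagataSet_eq]
    exact Set.iInter_subset_of_subset ⟨_, fun _ hx ↦ hDR hx⟩ subset_rfl

end KroneckerNagataSets

section TowerPullback

variable (k0 : Type) [Field k0] (r n : ℕ)

theorem mem_polyRing_iff {x : Amb k0 r} :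
    x ∈ polyRing k0 r n ↔ ∃ f : (Ffld k0 r n)[X], aeval (ambY k0 r) f = x := by
  have h : polyRing k0 r n =
      (Algebra.adjoin (Ffld k0 r n) {ambY k0 r}).toSubring := by
    rw [Algebra.adjoin_eq_ring_closure]
    exact congrArg (fun S ↦ Subring.closure (S ∪ _)) Subtype.range_coe.symm
  rw [h, Subalgebra.mem_toSubring, Algebra.adjoin_singleton_eq_range_aeval]
  rfl

theorem ambY_dvd_aeval_iff {f : (Ffld k0 r n)[X]} :
    (∃ h ∈ polyRing k0 r n, aeval (ambY k0 r) f = ambY k0 r * h) ↔ f.coeff 0 = 0 := by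
  rw [← X_dvd_iff]
  constructor
  · rintro ⟨_, hmem, e⟩
    obtain ⟨h, rfl⟩ := (mem_polyRing_iff k0 r n).1 hmem
    exact ⟨h, transcendental_iff_injective.1 (transcendental_ambY k0 r n) (by simpa using e)⟩
  · rintro ⟨h, rfl⟩
    exact ⟨_, (mem_polyRing_iff k0 r n).2 ⟨h, rfl⟩, by simp⟩

theorem kfld_le_Ffld : kfld k0 r n ≤ Ffld k0 r n :=
  fun _ hx ↦ Subfield.subset_closure (.inl hx)

theorem mem_Vset_iff {x : Amb k0 r} : x ∈ Vset k0 r n ↔ ∃ f g : (Ffld k0 r n)[X],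
    g.coeff 0 = 1 ∧ x = aeval (ambY k0 r) f / aeval (ambY k0 r) g := by
  constructor
  · rintro ⟨f, hf, g, hg, hYg, rfl⟩
    obtain ⟨f, rfl⟩ := (mem_polyRing_iff k0 r n).1 hf
    obtain ⟨g, rfl⟩ := (mem_polyRing_iff k0 r n).1 hg
    rw [ambY_dvd_aeval_iff] at hYg
    refine ⟨C (g.coeff 0)⁻¹ * f, C (g.coeff 0)⁻¹ * g, by simp [hYg], ?_⟩
    rw [map_mul, map_mul, mul_div_mul_left]
    simpa using hYg
  · rintro ⟨f, g, hg, rfl⟩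
    refine ⟨_, (mem_polyRing_iff k0 r n).2 ⟨f, rfl⟩, _, (mem_polyRing_iff k0 r n).2 ⟨g, rfl⟩, ?_,
      rfl⟩
    simp [ambY_dvd_aeval_iff, hg]

theorem Aset_eq_pullbackRing : Aset k0 r n =
    pullbackRing (kfld k0 r n).toSubring (Ffld k0 r n) (ambY k0 r) := by
  have hY := transcendental_ambY k0 r n
  ext x
  constructor
  · rintro ⟨c, hc, _, ⟨_, hv, rfl⟩, rfl⟩
    obtain ⟨f, g, hg, rfl⟩ := (mem_Vset_iff k0 r n).1 hv
    have hm := aeval_div_aeval_mem_pullbackRing hY (S := (kfld k0 r n).toSubring) (f := X * f)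
      (by simp) hg
    rw [map_mul, aeval_X, mul_div_assoc] at hm
    exact add_mem ((coe_mem_pullbackRing_iff hY (c := ⟨c, kfld_le_Ffld k0 r n hc⟩)).2 hc) hm
  · rintro ⟨f, g, hf, hg, hg0, rfl⟩
    obtain ⟨h, hh⟩ : X ∣ f - C (f.coeff 0) * g := X_dvd_iff.2 (by simp [mul_coeff_zero, hg])
    refine ⟨_, hf, _, ⟨_, (mem_Vset_iff k0 r n).2 ⟨h, g, hg, rfl⟩, rfl⟩, ?_⟩
    have hf' := congrArg (aeval (ambY k0 r)) (sub_eq_iff_eq_add.1 hh)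
    rw [hf', map_add, map_mul, map_mul, aeval_X, aeval_C, add_div, mul_div_cancel_right₀ _ hg0,
      mul_div_assoc, add_comm]
    rfl

end TowerPullback

section TowerDimension

variable (k0 : Type) [Field k0] (r n : ℕ)

theorem Aset_subset_Kfld : Aset k0 r n ⊆ Kfld k0 r n := by
  rw [Aset_eq_pullbackRing, Kfld_eq_adjoin_simple]
  exact pullbackRing_le_adjoin

theorem kfld_subset_Aset : (kfld k0 r n : Set (Amb k0 r)) ⊆ Aset k0 r n := by
  rw [Aset_eq_pullbackRing]
  exact fun c hc ↦ (coe_mem_pullbackRing_iff (transcendental_ambY k0 r n)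
    (c := ⟨c, kfld_le_Ffld k0 r n hc⟩)).2 hc

theorem range_algebraMap_kfld :
    Set.range (algebraMap (kfld k0 r n) (Amb k0 r)) = kfld k0 r n :=
  Subtype.range_coe

theorem valuativeDim_kfld_Kfld_le :
    valuativeDim (kfld k0 r n) (Kfld k0 r n) ≤ ((r - 1 + 1 : ℕ) : WithBot ℕ∞) := by
  rw [Kfld_eq_adjoin, ← range_algebraMap_kfld]
  refine (valuativeDim_adjoin_le _).trans (WithBot.coe_le_coe.2 ?_)
  refine (Set.encard_union_le _ _).trans ?_
  rw [Set.encard_singleton, Nat.cast_add, Nat.cast_one]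
  gcongr
  simpa using Set.encard_image_le (ambZ k0 r) Set.univ

theorem le_valuativeDim_kfld_Ffld :
    ((r - 1 : ℕ) : WithBot ℕ∞) ≤ valuativeDim (kfld k0 r n) (Ffld k0 r n) := by
  rw [Ffld_eq_adjoin, ← range_algebraMap_kfld]
  simpa using card_le_valuativeDim_adjoin (algebraicIndependent_ambZ k0 r n) Finset.univ

theorem valuativeDim_Aset :
    valuativeDim (Aset k0 r n) (Kfld k0 r n) = ((r - 1 + 1 : ℕ) : WithBot ℕ∞) := by
  refine le_antisymm ((valuativeDim_anti (kfld_subset_Aset k0 r n) _).trans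
    (valuativeDim_kfld_Kfld_le k0 r n)) ?_
  rw [Aset_eq_pullbackRing, Kfld_eq_adjoin_simple, Nat.cast_add, Nat.cast_one]
  exact (add_le_add_left (le_valuativeDim_kfld_Ffld k0 r n) 1).trans
    (valuativeDim_add_one_le_pullbackRing (transcendental_ambY k0 r n) (kfld_le_Ffld k0 r n))

theorem Dset_subset_Aset : Dset k0 r (n + 1) ⊆ Aset k0 r (n + 1) := by
  cases n with
  | zero => exact subset_rfl
  | succ n => exact Set.inter_subset_right

theorem Dset_subset_Kfld : Dset k0 r (n + 1) ⊆ Kfld k0 r (n + 1) :=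
  (Dset_subset_Aset k0 r n).trans (Aset_subset_Kfld k0 r (n + 1))

theorem Bset_eq_kroneckerRing : Bset k0 r (n + 2) =
    kroneckerRing (Dset k0 r (n + 1)) (Kfld k0 r (n + 1)) (ambX' k0 r (n + 2)) :=
  krSet_eq_kroneckerRing (Dset_subset_Kfld k0 r n) (transcendental_ambX' k0 r (n + 1))

theorem Dset_succ_eq_inter :
    Dset k0 r (n + 2) = Bset k0 r (n + 2) ∩ Aset k0 r (n + 2) := rfl

theorem ambX_mem_Ffld (hn : 1 ≤ n) : ambX k0 r n ∈ Ffld k0 r n :=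
  kfld_le_Ffld k0 r n (Subfield.subset_closure (.inr ⟨n, hn, le_rfl, rfl⟩))

theorem valuativeDim_kroneckerRing_inter_Aset_le (D : Set (Amb k0 r)) :
    valuativeDim (kroneckerRing D (Kfld k0 r n) (ambX' k0 r (n + 1)) ∩ Aset k0 r (n + 1))
      (Kfld k0 r (n + 1)) ≤
    max (valuativeDim D (Kfld k0 r n)) (valuativeDim (Aset k0 r (n + 1)) (Kfld k0 r (n + 1))) := by
  have hY := transcendental_ambY k0 r (n + 1)
  let z : Ffld k0 r (n + 1) := ⟨_, ambX_mem_Ffld k0 r (n + 1) n.succ_pos⟩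
  have hX' : (ambX' k0 r (n + 1))⁻¹ = ambY k0 r / (1 + ambY k0 r * z) := inv_div _ _
  have hK : ∀ x ∈ (Kfld k0 r n)⟮ambX' k0 r (n + 1)⟯, x ∈ (Ffld k0 r (n + 1))⟮ambY k0 r⟯ := by
    intro x hx
    have : x ∈ Kfld k0 r (n + 1) := (Kfld_succ k0 r n).symm ▸ hx
    rwa [Kfld_eq_adjoin_simple] at this
  rw [Kfld_succ, Aset_eq_pullbackRing]
  apply valuativeDim_kroneckerRing_inter_le (transcendental_ambX' k0 r n) <;> rw [hX']
  · exact div_one_add_mul_mem_pullbackRing hY z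
  · exact fun x hx ↦ exists_pow_mul_mem_pullbackRing hY z (hK x hx)
  · exact fun a ha ↦ inv_one_add_mul_mem_pullbackRing hY z ha

theorem valuativeDim_Dset :
    valuativeDim (Dset k0 r (n + 1)) (Kfld k0 r (n + 1)) = ((r - 1 + 1 : ℕ) : WithBot ℕ∞) := by
  induction n with
  | zero => exact valuativeDim_Aset k0 r 1
  | succ n ih =>
    refine le_antisymm ?_ ((valuativeDim_Aset k0 r (n + 2)).ge.trans
      (valuativeDim_anti (Dset_subset_Aset k0 r (n + 1)) _))
    rw [Dset_succ_eq_inter, Bset_eq_kroneckerRing]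
    refine (valuativeDim_kroneckerRing_inter_Aset_le k0 r (n + 1) _).trans ?_
    rw [ih, valuativeDim_Aset, max_self]

end TowerDimension

theorem tower_B_bezout_of_dim_r_general (k0 : Type) [Field k0] (r : ℕ) (hr : 1 ≤ r) (n : ℕ)
    (hn : 2 ≤ n) : ∃ B : Subring (Amb k0 r), (B : Set (Amb k0 r)) = Bset k0 r n ∧
      IsBezout B ∧ ringKrullDim B = (r : WithBot ℕ∞) := by
  obtain ⟨m, rfl⟩ := Nat.exists_eq_add_of_le' hn
  have hT := transcendental_ambX' k0 r (m + 1)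
  refine ⟨kroneckerRing (Dset k0 r (m + 1)) (Kfld k0 r (m + 1)) (ambX' k0 r (m + 2)),
    (Bset_eq_kroneckerRing k0 r m).symm, isBezout_kroneckerRing hT, ?_⟩
  rw [ringKrullDim_kroneckerRing hT, valuativeDim_kroneckerRing hT, valuativeDim_Dset,
    Nat.sub_add_cancel hr]

end

/-- In the tower construction, for every `n ≥ 2` the Kronecker function
ring `Bₙ = Kr_{K_{n-1}(X′ₙ)}(D_{n-1}, b)` is an `r`-dimensional Bézout domain. -/
theorem tower_B_bezout_of_dim_r
    (k0 : Type) [Field k0] (r : ℕ) (hr : 2 ≤ r) (n : ℕ) (hn : 2 ≤ n) :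
    ∀ B' : Subring (Amb k0 r), (B' : Set (Amb k0 r)) = Bset k0 r n →
      IsBezout ↥B' ∧ ringKrullDim ↥B' = (r : WithBot ℕ∞) := by
  intro B' hB'
  obtain ⟨B, hB, hBezout, hdim⟩ :=
    tower_B_bezout_of_dim_r_general k0 r (one_le_two.trans hr) n hn
  obtain rfl : B' = B := SetLike.coe_injective (hB'.trans hB.symm)
  exact ⟨hBezout, hdim⟩
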